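/- arXiv:math/0608759 — 3 statements merged into one kernel-verified Lean document; each statement's English description precedes it below -/
import Mathlib

section
/- Let D ≥ 1 and let P_1, …, P_n be partitions of D such that Σ_{i=1}^n c(P_i) = D − 1. Then there exist permutations σ_1, …, σ_n of {1, …, D} such that for each i the multiset of cycle lengths of σ_i (including fixed points as cycles of length 1) equals P_i, and the product σ_1 σ_2 ⋯ σ_n equals the cyclic permutation (1 2 3 … D). -/
/-!
Induct on `D`. A partition of `D` without a part `1` has defect `D - #(P i) ≥ D / 2`, and the
defects sum to `D - 1`, so at most one of the partitions lacks a part `1`. Hence there is an index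
`i` such that `P i` has a part `k + 1 ≥ 2` and every other `P j` has a part `1`. Replacing `k + 1`
by `k` and deleting those parts `1` gives partitions of `D - 1` to which the induction applies.
Multiplying the `i`-th permutation on the left by a transposition `(p x)`, where `p` is the new
point and `x` lies on a cycle of length `k`, inserts `p` into that cycle. In the product, `(p x)`
can be pulled to the front, where it becomes a transposition `(p y)`, and this inserts `p` into the
full cycle obtained so far.
-/

open Equiv Equiv.Perm
open scoped Finset

section Partitions

theorem two_mul_card_le_sum {P : Multiset ℕ} (hpos : ∀ a ∈ P, 0 < a) (h1 : 1 ∉ P) :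
    2 * P.card ≤ P.sum := by
  rw [mul_comm]
  refine Multiset.card_nsmul_le_sum (s := P) (a := 2) fun a ha => ?_
  have hne : a ≠ 1 := ne_of_mem_of_not_mem ha h1
  have := hpos a ha
  omega

theorem card_le_sum_of_pos {P : Multiset ℕ} (hpos : ∀ a ∈ P, 0 < a) : P.card ≤ P.sum := by
  simpa using Multiset.card_nsmul_le_sum (s := P) (a := 1) hpos

theorem exists_two_le_of_card_lt_sum {P : Multiset ℕ} (h : P.card < P.sum) : ∃ a ∈ P, 2 ≤ a := by
  by_contra! hlt
  have hle := Multiset.sum_le_card_nsmul P 1 fun a ha => Nat.lt_succ_iff.1 (hlt a ha)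
  rw [smul_eq_mul, mul_one] at hle
  omega

variable {ι : Type*} [Fintype ι]

/-- A family of partitions of `d` whose defects `d - #(P i)` have sum `d - 1`. By Riemann–Hurwitz,
this is the condition on the ramification of a polynomial of degree `d` over its finite branch
points. The sum is stated without subtraction on the right-hand side, which forces `d ≠ 0`. -/
structure IsPolynomialPassport (d : ℕ) (P : ι → Multiset ℕ) : Prop where
  pos : ∀ i, ∀ a ∈ P i, 0 < a
  sum_eq : ∀ i, (P i).sum = d
  sum_defect : ∑ i, (d - (P i).card) + 1 = d

namespace IsPolynomialPassport

variable {d : ℕ} {P : ι → Multiset ℕ}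

theorem two_mul_card_le (hP : IsPolynomialPassport d P) {i : ι} (hi : 1 ∉ P i) :
    2 * (P i).card ≤ d :=
  hP.sum_eq i ▸ two_mul_card_le_sum (hP.pos i) hi

theorem eq_of_one_notMem (hP : IsPolynomialPassport d P) {i j : ι} (hi : 1 ∉ P i) (hj : 1 ∉ P j) :
    i = j := by
  classical
  by_contra hij
  have hle : (d - (P i).card) + (d - (P j).card) ≤ ∑ k, (d - (P k).card) := by
    rw [← Finset.sum_pair (f := fun k => d - (P k).card) hij]
    exact Finset.sum_le_sum_of_subset (Finset.subset_univ _)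
  have := hP.two_mul_card_le hi
  have := hP.two_mul_card_le hj
  have := hP.sum_defect
  omega

theorem exists_card_lt (hP : IsPolynomialPassport d P) (hd : 2 ≤ d) : ∃ i, (P i).card < d := by
  obtain ⟨i, -, hi⟩ : ∃ i ∈ Finset.univ, d - (P i).card ≠ 0 :=
    Finset.exists_ne_zero_of_sum_ne_zero (by have := hP.sum_defect; omega)
  exact ⟨i, by omega⟩

theorem exists_two_le_and_forall_one_mem (hP : IsPolynomialPassport d P) (hd : 2 ≤ d) :
    ∃ i, (∃ a ∈ P i, 2 ≤ a) ∧ ∀ j ≠ i, 1 ∈ P j := by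
  suffices ∃ i, (P i).card < d ∧ ∀ j ≠ i, 1 ∈ P j by
    obtain ⟨i, hi, hone⟩ := this
    exact ⟨i, exists_two_le_of_card_lt_sum (by rwa [hP.sum_eq]), hone⟩
  by_cases h : ∃ i, 1 ∉ P i
  · obtain ⟨i, hi⟩ := h
    refine ⟨i, ?_, fun j hj => by_contra fun hj1 => hj (hP.eq_of_one_notMem hj1 hi)⟩
    have := hP.two_mul_card_le hi
    omega
  · push Not at h
    obtain ⟨i, hi⟩ := hP.exists_card_lt hd
    exact ⟨i, hi, fun j _ => h j⟩

theorem of_cons {Q : ι → Multiset ℕ} {R : Multiset ℕ} {i : ι} {k : ℕ}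
    (hP : IsPolynomialPassport (d + 1) P) (hk : 0 < k) (hPi : P i = (k + 1) ::ₘ R)
    (hQi : Q i = k ::ₘ R) (hQ : ∀ j ≠ i, P j = 1 ::ₘ Q j) : IsPolynomialPassport d Q := by
  classical
  have hpos : ∀ j, ∀ a ∈ Q j, 0 < a := by
    intro j a ha
    rcases eq_or_ne j i with rfl | hj
    · rcases Multiset.mem_cons.1 (hQi ▸ ha) with rfl | haR
      · exact hk
      · exact hP.pos j a (hPi ▸ Multiset.mem_cons_of_mem haR)
    · exact hP.pos j a (hQ j hj ▸ Multiset.mem_cons_of_mem ha)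
  have hsum : ∀ j, (Q j).sum = d := by
    intro j
    have hPj := hP.sum_eq j
    rcases eq_or_ne j i with rfl | hj
    · rw [hPi, Multiset.sum_cons] at hPj
      rw [hQi, Multiset.sum_cons]
      omega
    · rw [hQ j hj, Multiset.sum_cons] at hPj
      omega
  have hdefect : ∀ j, d + 1 - (P j).card = (d - (Q j).card) + if j = i then 1 else 0 := by
    intro j
    have hle : (Q j).card ≤ d := hsum j ▸ card_le_sum_of_pos (hpos j)
    split_ifs with hj
    · subst hj
      rw [hQi, Multiset.card_cons] at hle
      rw [hPi, hQi, Multiset.card_cons, Multiset.card_cons]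
      omega
    · rw [hQ j hj, Multiset.card_cons]
      omega
  refine ⟨hpos, hsum, ?_⟩
  have h := hP.sum_defect
  simp only [hdefect, Finset.sum_add_distrib, Finset.sum_ite_eq', Finset.mem_univ, if_true] at h
  omega

theorem exists_reduction (hP : IsPolynomialPassport (d + 1) P) (hd : 1 ≤ d) :
    ∃ (Q : ι → Multiset ℕ) (i : ι) (k : ℕ) (R : Multiset ℕ), IsPolynomialPassport d Q ∧
      P i = (k + 1) ::ₘ R ∧ Q i = k ::ₘ R ∧ ∀ j ≠ i, P j = 1 ::ₘ Q j := by
  classical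
  obtain ⟨i, ⟨a, ha, ha2⟩, hone⟩ := hP.exists_two_le_and_forall_one_mem (by omega)
  obtain ⟨k, rfl⟩ : ∃ k, a = k + 1 := ⟨a - 1, by omega⟩
  obtain ⟨R, hPi⟩ := Multiset.exists_cons_of_mem ha
  let Q : ι → Multiset ℕ := Function.update (fun j => (P j).erase 1) i (k ::ₘ R)
  have hQi : Q i = k ::ₘ R := Function.update_self ..
  have hQ : ∀ j ≠ i, P j = 1 ::ₘ Q j := fun j hj => by
    rw [show Q j = (P j).erase 1 from Function.update_of_ne hj .., Multiset.cons_erase (hone j hj)]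
  exact ⟨Q, i, k, R, hP.of_cons (by omega) hPi hQi hQ, hPi, hQi, hQ⟩

end IsPolynomialPassport

end Partitions

section Products

theorem prod_ofFn_update_mul {G : Type*} [Group G] {n : ℕ} (σ : Fin n → G) (i : Fin n) (g : G) :
    (List.ofFn (Function.update σ i (g * σ i))).prod =
      ((List.ofFn σ).take i).prod * g * ((List.ofFn σ).take i).prod⁻¹ * (List.ofFn σ).prod := by
  have hset (a : G) : List.ofFn (Function.update σ i a) = (List.ofFn σ).set i a :=
    List.ext_getElem (by simp) fun j _ _ => by
      simp [List.getElem_set, Function.update_apply, Fin.ext_iff, eq_comm]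
  have hprod (a : G) : (List.ofFn (Function.update σ i a)).prod =
      ((List.ofFn σ).take i).prod * a * ((List.ofFn σ).drop (i + 1)).prod := by
    simp [hset, List.prod_set]
  have hself := hprod (σ i)
  rw [Function.update_eq_self] at hself
  rw [hprod, hself]
  group

variable {α : Type*} [DecidableEq α] [Fintype α] {S : Finset α}

theorem support_list_prod_subset {l : List (Perm α)} (hl : ∀ τ ∈ l, τ.support ⊆ S) :
    l.prod.support ⊆ S :=
  List.prod_induction (fun τ : Perm α => τ.support ⊆ S)
    (fun σ τ hσ hτ => (support_mul_le σ τ).trans (sup_le hσ hτ)) (by simp) hl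

theorem support_swap_mul_subset_insert {τ : Perm α} (hτ : τ.support ⊆ S) (p : α) {x : α}
    (hx : x ∈ S) : (swap p x * τ).support ⊆ insert p S := by
  intro z hz
  by_contra hzS
  obtain ⟨hzp, hzS⟩ : z ≠ p ∧ z ∉ S := by simpa using hzS
  have hτz : τ z = z := notMem_support.1 fun h => hzS (hτ h)
  exact mem_support.1 hz (by
    rw [Perm.mul_apply, hτz, swap_apply_of_ne_of_ne hzp (ne_of_mem_of_not_mem hx hzS).symm])

theorem exists_prod_ofFn_update_swap_mul {p x : α} (hp : p ∉ S) (hx : x ∈ S) {n : ℕ}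
    {σ : Fin n → Perm α} (hσ : ∀ j, (σ j).support ⊆ S) (i : Fin n) :
    ∃ y ∈ S, (List.ofFn (Function.update σ i (swap p x * σ i))).prod =
      swap p y * (List.ofFn σ).prod := by
  set π := ((List.ofFn σ).take i).prod with hπ
  have hsupp : π.support ⊆ S := support_list_prod_subset fun τ hτ =>
    List.forall_mem_ofFn_iff (P := fun τ : Perm α => τ.support ⊆ S).2 hσ τ
      (List.mem_of_mem_take hτ)
  have hfix : π p = p := notMem_support.1 fun h => hp (hsupp h)
  refine ⟨π x, (isInvariant_of_support_le hsupp x).2 hx, ?_⟩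
  rw [prod_ofFn_update_mul, ← hπ, ← swap_apply_apply, hfix]

end Products

section CycleInsertion

variable {α : Type*} {c f : Perm α} {C : Set α} {p x y : α}

theorem sameCycle_of_forall_sameCycle_apply (hc : c.IsCycleOn C)
    (hf : ∀ z ∈ C, f.SameCycle z (c z)) (hx : x ∈ C) (hy : y ∈ C) : f.SameCycle x y := by
  have hmem (m : ℤ) : (c ^ m) x ∈ C := (hc.1.perm_zpow m).mapsTo hx
  obtain ⟨m, rfl⟩ := hc.2 hx hy
  clear hy
  induction m with
  | zero => rfl
  | succ m ih =>
    rw [add_comm, zpow_one_add]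
    exact ih.trans (hf _ (hmem m))
  | pred m ih =>
    have h := hf _ (hmem (-m - 1))
    rw [← Perm.mul_apply, ← zpow_one_add, add_sub_cancel] at h
    exact ih.trans h.symm

theorem isCycleOn_insert_swap_mul [DecidableEq α] (hc : c.IsCycleOn C) (hx : x ∈ C)
    (hpC : p ∉ C) (hp : c p = p) : (swap p x * c).IsCycleOn (insert p C) := by
  have hbij : Set.BijOn (swap p x * c) (insert p C) (insert p C) := by
    have hcbij : Set.BijOn c (insert p C) (insert p C) := by
      simpa only [hp] using hc.1.insert (a := p) (by rwa [hp])
    exact (swap_bijOn_self (by simp [hx])).comp hcbij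
  have hpx : (swap p x * c) p = x := by simp [hp]
  have hstep : ∀ y ∈ C, (swap p x * c).SameCycle y (c y) := by
    intro y hy
    rcases eq_or_ne (c y) x with hcy | hcy
    · have hyp : (swap p x * c) y = p := by simp [hcy]
      rw [hcy, ← sameCycle_apply_left, hyp, ← sameCycle_apply_left, hpx]
    · have hcyp : c y ≠ p := ne_of_mem_of_not_mem (hc.1.mapsTo hy) hpC
      have hfy : (swap p x * c) y = c y := swap_apply_of_ne_of_ne hcyp hcy
      rw [← sameCycle_apply_left, hfy]
  have hall : ∀ y ∈ insert p C, (swap p x * c).SameCycle x y := by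
    rintro y (rfl | hy)
    · rw [sameCycle_comm, ← sameCycle_apply_left, hpx]
    · exact sameCycle_of_forall_sameCycle_apply hc hstep hx hy
  exact ⟨hbij, fun y hy z hz => (hall y hy).symm.trans (hall z hz)⟩

end CycleInsertion

section CycleLengths

variable {α : Type*} [DecidableEq α] [Fintype α] {S T : Finset α} {σ τ : Perm α}

/-- The lengths of the cycles of `σ` on `S`, where the fixed points in `S` count as cycles of
length `1`. This is meant for permutations `σ` supported in `S`: all nontrivial cycles of `σ` are
counted, also those outside `S`. -/
def cycleLengthsOn (S : Finset α) (σ : Perm α) : Multiset ℕ :=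
  σ.cycleType + Multiset.replicate #(S \ σ.support) 1

theorem cycleLengthsOn_mul (hST : Disjoint S T) (hσ : σ.support ⊆ S) (hτ : τ.support ⊆ T) :
    cycleLengthsOn (S ∪ T) (σ * τ) = cycleLengthsOn S σ + cycleLengthsOn T τ := by
  have hστ : σ.Disjoint τ :=
    disjoint_iff_disjoint_support.2 (Finset.disjoint_of_subset_left hσ
      (Finset.disjoint_of_subset_right hτ hST))
  have hcard : #((S ∪ T) \ (σ * τ).support) = #(S \ σ.support) + #(T \ τ.support) := by
    rw [hστ.support_mul, Finset.card_sdiff_of_subset (Finset.union_subset_union hσ hτ),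
      Finset.card_sdiff_of_subset hσ, Finset.card_sdiff_of_subset hτ,
      Finset.card_union_of_disjoint hST,
      Finset.card_union_of_disjoint (disjoint_iff_disjoint_support.1 hστ)]
    have := Finset.card_le_card hσ
    have := Finset.card_le_card hτ
    omega
  rw [cycleLengthsOn, hστ.cycleType_mul, hcard, Multiset.replicate_add, add_add_add_comm]
  rfl

theorem cycleLengthsOn_of_isCycleOn (hS : S.Nonempty) (hσ : σ.support ⊆ S) (h : σ.IsCycleOn S) :
    cycleLengthsOn S σ = {#S} := by
  rcases hS.exists_eq_singleton_or_nontrivial with ⟨x, rfl⟩ | hnt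
  · have hσ1 : σ = 1 := card_support_le_one.1 (Finset.card_le_card hσ)
    simp [cycleLengthsOn, hσ1]
  · have hcyc : σ.IsCycle := isCycle_iff_exists_isCycleOn.2
      ⟨S, hnt, h, fun x hx => hσ (mem_support.2 hx)⟩
    have hsupp : σ.support = S := hσ.antisymm fun x hx => mem_support.2 (h.apply_ne hnt hx)
    simp [cycleLengthsOn, hcyc.cycleType, hsupp]

theorem cycleLengthsOn_insert_of_apply_eq {p : α} (hp : p ∉ S) (hσ : σ p = p) :
    cycleLengthsOn (insert p S) σ = 1 ::ₘ cycleLengthsOn S σ := by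
  have hpσ : p ∉ σ.support := notMem_support.2 hσ
  have hpS : p ∉ S \ σ.support := fun h => hp (Finset.mem_sdiff.1 h).1
  rw [cycleLengthsOn, Finset.insert_sdiff_of_notMem _ hpσ, Finset.card_insert_of_notMem hpS,
    Multiset.replicate_succ, Multiset.add_cons, cycleLengthsOn]

theorem exists_isCycleOn_mul_of_mem_cycleLengthsOn (hσ : σ.support ⊆ S) {k : ℕ}
    (hk : k ∈ cycleLengthsOn S σ) :
    ∃ (C : Finset α) (c ρ : Perm α), C ⊆ S ∧ C.Nonempty ∧ #C = k ∧ c.IsCycleOn C ∧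
      c.support ⊆ C ∧ ρ.support ⊆ S \ C ∧ σ = c * ρ := by
  rcases Multiset.mem_add.1 hk with hk | hk
  · obtain ⟨c, ρ, rfl, hdisj, hc, rfl⟩ := mem_cycleType_iff.1 hk
    rw [hdisj.support_mul, Finset.union_subset_iff] at hσ
    refine ⟨c.support, c, ρ, hσ.1, ?_, rfl, ?_, subset_rfl, ?_, rfl⟩
    · exact Finset.card_pos.1 (two_pos.trans_le hc.two_le_card_support)
    · simpa only [coe_support_eq_set_support] using! hc.isCycleOn
    · exact Finset.subset_sdiff.2 ⟨hσ.2, (disjoint_iff_disjoint_support.1 hdisj).symm⟩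
  · obtain ⟨hcard, rfl⟩ := Multiset.mem_replicate.1 hk
    obtain ⟨x, hx⟩ := Finset.card_ne_zero.1 hcard
    obtain ⟨hxS, hxσ⟩ := Finset.mem_sdiff.1 hx
    exact ⟨{x}, 1, σ, by simpa using hxS, by simp, by simp, by simp, by simp,
      Finset.subset_sdiff.2 ⟨hσ, by simpa using hxσ⟩, by simp⟩

theorem exists_cycleLengthsOn_swap_mul {p : α} (hp : p ∉ S) (hσ : σ.support ⊆ S) {k : ℕ}
    {R : Multiset ℕ} (hk : cycleLengthsOn S σ = k ::ₘ R) :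
    ∃ x ∈ S, cycleLengthsOn (insert p S) (swap p x * σ) = (k + 1) ::ₘ R := by
  obtain ⟨C, c, ρ, hCS, ⟨x, hx⟩, rfl, hcyc, hc, hρ, rfl⟩ :=
    exists_isCycleOn_mul_of_mem_cycleLengthsOn hσ (k := k) (by simp [hk])
  have hpC : p ∉ C := fun h => hp (hCS h)
  have hcp : c p = p := notMem_support.1 fun h => hpC (hc h)
  have hsupp : (swap p x * c).support ⊆ insert p C := support_swap_mul_subset_insert hc p hx
  have hinsert : (swap p x * c).IsCycleOn (insert p C : Finset α) := by
    simpa using isCycleOn_insert_swap_mul hcyc hx hpC hcp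
  have hR : cycleLengthsOn (S \ C) ρ = R := by
    rw [← Finset.union_sdiff_of_subset hCS, cycleLengthsOn_mul Finset.disjoint_sdiff hc hρ,
      cycleLengthsOn_of_isCycleOn ⟨x, hx⟩ hc hcyc, Multiset.singleton_add] at hk
    exact (Multiset.cons_inj_right _).1 hk
  have hdisj : Disjoint (insert p C) (S \ C) :=
    Finset.disjoint_insert_left.2 ⟨by simp [hp], Finset.disjoint_sdiff⟩
  refine ⟨x, hCS hx, ?_⟩
  rw [← mul_assoc, ← Finset.union_sdiff_of_subset hCS, ← Finset.insert_union,
    cycleLengthsOn_mul hdisj hsupp hρ,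
    cycleLengthsOn_of_isCycleOn (Finset.insert_nonempty p C) hsupp hinsert, hR,
    Finset.card_insert_of_notMem hpC, Multiset.singleton_add]

end CycleLengths

section Realization

theorem IsPolynomialPassport.exists_perms_isCycleOn_prod {α : Type*} [DecidableEq α]
    [Fintype α] {S : Finset α} {n : ℕ} {P : Fin n → Multiset ℕ} (hP : IsPolynomialPassport #S P) :
    ∃ σ : Fin n → Perm α, (∀ i, (σ i).support ⊆ S) ∧ (∀ i, cycleLengthsOn S (σ i) = P i) ∧
      (List.ofFn σ).prod.IsCycleOn S := by
  have hS : S.Nonempty := Finset.card_pos.1 (by have := hP.sum_defect; omega)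
  induction hS using Finset.Nonempty.cons_induction generalizing P with
  | singleton p =>
    refine ⟨fun _ => 1, by simp, fun i => ?_, by simp⟩
    have hPi : P i = {1} := congrArg Nat.Partition.parts <|
      Subsingleton.elim (⟨P i, hP.pos i _, hP.sum_eq i⟩ : Nat.Partition 1) (.indiscrete 1)
    rw [cycleLengthsOn_of_isCycleOn (by simp) (by simp) (by simp), hPi, Finset.card_singleton]
  | cons p S hpS hS ih =>
    rw [Finset.card_cons] at hP
    obtain ⟨Q, i, k, R, hQ, hPi, hQi, hQj⟩ := hP.exists_reduction hS.card_pos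
    obtain ⟨σ, hσ, hlen, hcyc⟩ := ih hQ
    obtain ⟨x, hx, hlenx⟩ := exists_cycleLengthsOn_swap_mul hpS (hσ i) ((hlen i).trans hQi)
    obtain ⟨y, hy, hprod⟩ := exists_prod_ofFn_update_swap_mul hpS hx hσ i
    have hfix : (List.ofFn σ).prod p = p := notMem_support.1 fun h =>
      hpS (support_list_prod_subset (List.forall_mem_ofFn_iff.2 hσ) h)
    rw [Finset.cons_eq_insert]
    refine ⟨Function.update σ i (swap p x * σ i), fun j => ?_, fun j => ?_, ?_⟩
    · rcases eq_or_ne j i with rfl | hj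
      · rw [Function.update_self]
        exact support_swap_mul_subset_insert (hσ j) p hx
      · rw [Function.update_of_ne hj]
        exact (hσ j).trans (Finset.subset_insert p S)
    · rcases eq_or_ne j i with rfl | hj
      · rw [Function.update_self, hlenx, hPi]
      · have hσp : σ j p = p := notMem_support.1 fun h => hpS (hσ j h)
        rw [Function.update_of_ne hj, cycleLengthsOn_insert_of_apply_eq hpS hσp, hlen, hQj j hj]
    · rw [hprod, Finset.coe_insert]
      exact isCycleOn_insert_swap_mul hcyc hy hpS hfix

theorem isConj_finRotate_of_isCycleOn_univ {D : ℕ} {τ : Perm (Fin D)}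
    (hτ : τ.IsCycleOn Set.univ) : IsConj τ (finRotate D) := by
  match D with
  | 0 | 1 => rw [Subsingleton.elim τ]
  | n + 2 =>
    have hne (x : Fin (n + 2)) : τ x ≠ x := hτ.apply_ne Set.nontrivial_univ (Set.mem_univ x)
    have hcyc : τ.IsCycle := isCycle_iff_exists_isCycleOn.2
      ⟨Set.univ, Set.nontrivial_univ, hτ, fun _ _ => Set.mem_univ _⟩
    have hsupp : τ.support = Finset.univ := Finset.eq_univ_of_forall fun x => mem_support.2 (hne x)
    exact hcyc.isConj isCycle_finRotate (by rw [hsupp, support_finRotate])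

end Realization

/-- **Realizing cycle types with product a full cycle.**
Let `D ≥ 1` and let `P 1, …, P n` be partitions of `D` (multisets of positive
integers summing to `D`) such that `Σᵢ c(Pᵢ) = D − 1`, where
`c(P) = D − (number of parts of P)`.  Then there exist permutations
`σ 1, …, σ n` of `{1, …, D}` such that the full multiset of cycle lengths of
`σ i` (fixed points counted as cycles of length `1`, i.e. the cycle type of
`σ i` together with one `1` for each fixed point) equals `P i` for every `i`,
and the product `σ 1 · σ 2 ⋯ σ n` is the cyclic permutation `(1 2 3 … D)`. -/
theorem exists_perms_with_cycle_types_prod_cycle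
    (D n : ℕ) (hD : 1 ≤ D)
    (P : Fin n → Multiset ℕ)
    (hpos : ∀ i : Fin n, ∀ a ∈ P i, 0 < a)
    (hsum : ∀ i : Fin n, (P i).sum = D)
    (hc : ∑ i : Fin n, (D - (P i).card) = D - 1) :
    ∃ σ : Fin n → Equiv.Perm (Fin D),
      (∀ i : Fin n,
        (σ i).cycleType + Multiset.replicate (D - ((σ i).cycleType).sum) 1 = P i) ∧
      (List.ofFn σ).prod = finRotate D := by
  obtain ⟨σ, -, hlen, hcyc⟩ := IsPolynomialPassport.exists_perms_isCycleOn_prod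
    (S := (Finset.univ : Finset (Fin D))) (P := P)
    (by rw [Finset.card_univ, Fintype.card_fin]; exact ⟨hpos, hsum, by omega⟩)
  rw [Finset.coe_univ] at hcyc
  obtain ⟨g, hg⟩ := isConj_iff.1 (isConj_finRotate_of_isCycleOn_univ hcyc)
  refine ⟨fun i => g * σ i * g⁻¹, fun i => ?_, ?_⟩
  · rw [cycleType_conj, ← hlen i, cycleLengthsOn, sum_cycleType,
      Finset.card_sdiff_of_subset (Finset.subset_univ _), Finset.card_univ, Fintype.card_fin]
  · rw [← hg, ← MulAut.conj_apply, map_list_prod, List.map_ofFn]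
    rfl
end

section
/- Let F : T → T be a polynomial-like branched covering of a simplicial tree. Then there exists an integer N(F) > 0 such that h(F(v)) = h(v) + N(F) for every vertex v ∈ V(T), where h is the combinatorial height. -/
open SimpleGraph Function Opposite

/-- A locally finite simplicial tree together with a self-map that is a
branched covering: a simplicial map (edges map onto edges) such that the
induced map on edges adjacent to any vertex is surjective onto the edges
adjacent to the image vertex, and every vertex has finitely many preimages. -/
structure TreeDyn (V : Type) where
  G : SimpleGraph V
  isTree : G.IsTree
  locFin : ∀ v : V, (G.neighborSet v).Finite
  F : V → V
  adjMap : ∀ ⦃v w : V⦄, G.Adj v w → G.Adj (F v) (F w)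
  edgeSurj : ∀ ⦃v w' : V⦄, G.Adj (F v) w' → ∃ w : V, G.Adj v w ∧ F w = w'
  finFibers : ∀ v' : V, {v : V | F v = v'}.Finite

namespace TreeDyn

variable {V : Type}

/-- A local degree function for the branched covering `T.F`: positive on
vertices and edges (edges adjacent to `v` are recorded by their other
endpoint), symmetric on edges, satisfying the Riemann–Hurwitz style
inequality `2 deg(v) - 2 ≥ Σ (deg e - 1)` at each vertex, and the local
equality `deg v = Σ {deg e' : e' adjacent to v, F(e') = F(e)}` for each
edge `e` adjacent to `v`. -/
def IsLocalDeg (T : TreeDyn V) (dV : V → ℕ) (dE : V → V → ℕ) : Prop :=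
  (∀ v w : V, dE v w = dE w v) ∧
  (∀ v : V, 0 < dV v) ∧
  (∀ ⦃v w : V⦄, T.G.Adj v w → 0 < dE v w) ∧
  (∀ v : V, (∑ᶠ w ∈ T.G.neighborSet v, (dE v w - 1)) + 2 ≤ 2 * dV v) ∧
  (∀ ⦃v w : V⦄, T.G.Adj v w →
    dV v = ∑ᶠ w' ∈ {w' : V | T.G.Adj v w' ∧ T.F w' = T.F w}, dE v w')

/-- `x` and `y` are in the same grand orbit if `F^[n] x = F^[m] y` for some `n, m > 0`. -/
def GrandOrbit (T : TreeDyn V) (x y : V) : Prop :=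
  ∃ n m : ℕ, 0 < n ∧ 0 < m ∧ T.F^[n] x = T.F^[m] y

end TreeDyn

/-- The natural topology on the space of ends of a graph: the subspace
topology induced from the product of the (discrete) spaces of components
of complements of finite sets. -/
def endTop {V : Type} (G : SimpleGraph V) : TopologicalSpace G.end :=
  TopologicalSpace.induced Subtype.val
    (⨅ K : (Finset V)ᵒᵖ, TopologicalSpace.induced (fun f => f K) ⊥)

/-- An end is isolated if it is an isolated point of the space of ends. -/
def IsIsolatedEnd {V : Type} (G : SimpleGraph V) (e : G.end) : Prop :=
  @IsOpen G.end (endTop G) {e}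

namespace TreeDyn

variable {V : Type}

/-- `T` is polynomial-like with distinguished end `infty`:
(II) a local degree function exists, (I) `infty` is the unique isolated end,
(III) no vertex has valence one, and (IV) the grand orbit of every vertex
contains a vertex of valence at least three. -/
def IsPolyLike (T : TreeDyn V) (infty : T.G.end) : Prop :=
  (∃ dV dE, T.IsLocalDeg dV dE) ∧
  IsIsolatedEnd T.G infty ∧
  (∀ e : T.G.end, IsIsolatedEnd T.G e → e = infty) ∧
  (∀ v : V, (T.G.neighborSet v).ncard ≠ 1) ∧
  (∀ v : V, ∃ w : V, T.GrandOrbit v w ∧ 3 ≤ (T.G.neighborSet w).ncard)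

/-- The vertex `x` lies below the vertex `v` (the path from `x` to the
end `infty` passes through `v`): either `x = v`, or `x` and `infty`
determine different components of the complement of `{v}`. -/
def Below (T : TreeDyn V) (infty : T.G.end) (v x : V) : Prop :=
  x = v ∨ ∃ h : x ∉ (({v} : Finset V) : Set V),
    T.G.componentComplMk h ≠ infty.val (op ({v} : Finset V))

/-- The end `p` lies below the vertex `v` (the path from `p` to `infty`
passes through `v`). -/
def EndBelow (T : TreeDyn V) (infty : T.G.end) (v : V) (p : T.G.end) : Prop :=
  p.val (op ({v} : Finset V)) ≠ infty.val (op ({v} : Finset V))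

/-- `v₀` is the base of the tree: the vertex of valence ≥ 3 closest to
`infty`, i.e. every vertex of valence ≥ 3 lies below it. -/
def IsBase (T : TreeDyn V) (infty : T.G.end) (v₀ : V) : Prop :=
  3 ≤ (T.G.neighborSet v₀).ncard ∧
  ∀ w : V, 3 ≤ (T.G.neighborSet w).ncard → T.Below infty v₀ w

open Classical in
/-- The combinatorial height relative to the base `v₀`: `|h v|` is the
graph distance to `v₀`, with `h v ≥ 0` exactly when `v` lies on the ray
from `v₀` to `infty` (i.e. `v₀` lies below `v`). -/
noncomputable def height (T : TreeDyn V) (infty : T.G.end) (v₀ : V) (v : V) : ℤ :=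
  if T.Below infty v v₀ then (T.G.dist v₀ v : ℤ) else -(T.G.dist v₀ v : ℤ)

/-- `Dg` is the global degree of `T.F`: for every edge `{v,w}`, the sum of
the degrees of the edges mapping onto it equals `Dg`. -/
def IsGlobalDeg (T : TreeDyn V) (dE : V → V → ℕ) (Dg : ℕ) : Prop :=
  ∀ ⦃v w : V⦄, T.G.Adj v w →
    Dg = ∑ᶠ a ∈ {a : V | T.F a = v}, ∑ᶠ b ∈ {b : V | T.G.Adj a b ∧ T.F b = w}, dE a b

/-- The critical multiplicity of a vertex. -/
noncomputable def multV (T : TreeDyn V) (dV : V → ℕ) (dE : V → V → ℕ) (v : V) : ℕ :=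
  2 * dV v - 2 - ∑ᶠ w ∈ T.G.neighborSet v, (dE v w - 1)

/-- The critical multiplicity of an end `p ≠ infty`: the limiting
(= minimal) value of `dV` along the path from `infty` to `p`, minus one. -/
noncomputable def multEnd (T : TreeDyn V) (infty : T.G.end) (dV : V → ℕ) (p : T.G.end) : ℕ :=
  sInf {d : ℕ | ∃ v : V, T.EndBelow infty v p ∧ dV v = d} - 1

/-- `μ` is the mass function: `μ v = 1` for `h(v) ≥ 0` and
`μ(F v) = (deg F / deg v) · μ v`. -/
def IsMass (T : TreeDyn V) (infty : T.G.end) (v₀ : V) (dV : V → ℕ) (Dg : ℕ)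
    (μ : V → ℚ) : Prop :=
  (∀ v : V, 0 ≤ T.height infty v₀ v → μ v = 1) ∧
  (∀ v : V, μ (T.F v) = ((Dg : ℚ) / (dV v : ℚ)) * μ v)

end TreeDyn

/-!
Every vertex `v` has a unique neighbour `up v` in the direction of `infty`, and the height `h`
increases by one from `v` to `up v`. The key point is that `F` commutes with `up`. Lift the ray
`i ↦ up^i (F v)` through `F` to a ray `r` starting at `v`. As fibres are finite, far out on `r` the
edge leading back along `r` is the only edge at its vertex with its image, so it carries the full
degree of the vertex. Hence the vertex degrees are nonincreasing along `r`, therefore eventually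
constant, and then the forward edge carries the full degree as well. The image ray does not branch
beyond the base, so `r` eventually does not branch either and its end is isolated. This end must be
`infty`, and so `r` starts with the edge from `v` to `up v`.

It follows that `h ∘ F - h` is a constant. It is nonnegative because a preimage of the base has
valence at least three, hence height at most zero. It is not zero, since otherwise heights would be
constant on grand orbits, and that of `up v₀` would contain no vertex of valence at least three.
-/

open Filter

theorem eventually_eq_of_succ_le {α : Type*} [PartialOrder α] [WellFoundedLT α] {f : ℕ → α}
    (hf : ∀ᶠ i in atTop, f (i + 1) ≤ f i) : ∀ᶠ i in atTop, f (i + 1) = f i := by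
  obtain ⟨n, hn⟩ := eventually_atTop.1 hf
  have hanti : Antitone fun k => f (n + k) :=
    antitone_nat_of_succ_le fun k => hn (n + k) (n.le_add_right k)
  obtain ⟨m, hm⟩ := WellFoundedLT.antitone_chain_condition hanti
  refine eventually_atTop.2 ⟨n + m, fun i hi => ?_⟩
  obtain ⟨k, rfl⟩ := Nat.exists_eq_add_of_le hi
  simpa only [← add_assoc] using (hm (m + k + 1) (by omega)).symm.trans (hm (m + k) (by omega))

section Graph

variable {V : Type*} {G : SimpleGraph V}

section ComponentCompl

variable {K : Set V} {C : G.ComponentCompl K} {x y : V}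

theorem componentCompl_subset_of_forall_adj {s : Set V} (hxC : x ∈ C) (hxs : x ∈ s)
    (hs : ∀ y ∈ s, ∀ z ∉ K, G.Adj y z → z ∈ s) : (C : Set V) ⊆ s := by
  obtain ⟨hxK, rfl⟩ := hxC
  rintro y ⟨hyK, hy⟩
  obtain ⟨p⟩ := ConnectedComponent.exact hy.symm
  by_contra hys
  obtain ⟨d, -, hd, hd'⟩ := p.exists_boundary_dart (Subtype.val ⁻¹' s) hxs hys
  exact hd' (hs _ hd _ d.snd.2 d.adj)

theorem mem_componentCompl_iff_exists_walk (hx : x ∈ C) :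
    y ∈ C ↔ ∃ p : G.Walk x y, ∀ z ∈ p.support, z ∉ K := by
  constructor
  · intro hy
    refine componentCompl_subset_of_forall_adj (s := {y | ∃ p : G.Walk x y, ∀ z ∈ p.support, z ∉ K})
      hx ⟨.nil, by simpa using ComponentCompl.notMem_of_mem hx⟩ ?_ hy
    rintro a ⟨p, hp⟩ b hb hab
    refine ⟨p.concat hab, fun z hz => ?_⟩
    rw [Walk.support_concat, List.mem_append, List.mem_singleton] at hz
    rcases hz with hz | rfl
    exacts [hp z hz, hb]
  · rintro ⟨p, hp⟩
    by_contra hy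
    obtain ⟨d, hdp, hd, hd'⟩ := p.exists_boundary_dart C hx hy
    exact hd' (ComponentCompl.mem_of_adj _ _ hd (hp _ (p.dart_snd_mem_support_of_mem_darts hdp))
      d.adj)

end ComponentCompl

section Distance

variable {u v x y a b : V}

theorem dist_add_dist_eq_of_forall_mem_support (hG : G.Connected)
    (h : ∀ p : G.Walk x y, v ∈ p.support) : G.dist x v + G.dist v y = G.dist x y := by
  classical
  refine le_antisymm ?_ hG.dist_triangle
  obtain ⟨p, hp⟩ := hG.exists_walk_length_eq_dist x y
  calc G.dist x v + G.dist v y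
      ≤ (p.takeUntil v (h p)).length + (p.dropUntil v (h p)).length :=
        add_le_add (dist_le _) (dist_le _)
    _ = G.dist x y := by rw [← Walk.length_append, p.take_spec, hp]

theorem exists_adj_dist_eq_add_one (hG : G.Connected) (huv : u ≠ v) :
    ∃ w, G.Adj v w ∧ G.dist u v = G.dist u w + 1 := by
  obtain ⟨p, hp⟩ := hG.exists_walk_length_eq_dist v u
  cases p with
  | nil => exact absurd rfl huv
  | @cons _ w _ hvw p =>
    refine ⟨w, hvw, le_antisymm ?_ ?_⟩
    · rw [← dist_eq_one_iff_adj.2 hvw.symm]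
      exact hG.dist_triangle
    · rw [dist_comm, dist_comm (u := u), ← hp, Walk.length_cons]
      exact Nat.succ_le_succ (dist_le p)

theorem forall_mem_support_iff_dist_add_dist_eq (hG : G.IsTree) :
    (∀ p : G.Walk x y, v ∈ p.support) ↔ G.dist x v + G.dist v y = G.dist x y := by
  classical
  refine ⟨dist_add_dist_eq_of_forall_mem_support hG.connected, fun h p => ?_⟩
  obtain ⟨q, hq⟩ := hG.connected.exists_walk_length_eq_dist x v
  obtain ⟨q', hq'⟩ := hG.connected.exists_walk_length_eq_dist v y
  have hpath : (q.append q').IsPath :=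
    Walk.isPath_of_length_eq_dist _ (by rw [Walk.length_append, hq, hq', h])
  have hunique : q.append q' = p.bypass :=
    congrArg Subtype.val
      ((hG.isAcyclic.subsingleton_path x y).elim ⟨_, hpath⟩ ⟨_, p.bypass_isPath⟩)
  refine p.support_bypass_subset_support (hunique ▸ ?_)
  exact (Walk.mem_support_append_iff _ _).2 (Or.inl q.end_mem_support)

theorem eq_of_adj_of_dist_lt (hG : G.IsTree) (ha : G.Adj v a) (hb : G.Adj v b)
    (hau : G.dist u a < G.dist u v) (hbu : G.dist u b < G.dist u v) : a = b := by
  have hda := hG.dist_eq_dist_add_one_of_adj u ha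
  have hdb := hG.dist_eq_dist_add_one_of_adj u hb
  have hav : ∀ p : G.Walk u v, a ∈ p.support := by
    rw [forall_mem_support_iff_dist_add_dist_eq hG, dist_eq_one_iff_adj.2 ha.symm]
    omega
  have hab : ∀ p : G.Walk u b, a ∈ p.support := by
    intro p
    have hmem := hav (p.concat hb.symm)
    rw [Walk.support_concat, List.mem_append, List.mem_singleton] at hmem
    exact hmem.resolve_right ha.ne'
  have hgeod := dist_add_dist_eq_of_forall_mem_support hG.connected hab
  exact hG.connected.dist_eq_zero_iff.1 (by omega)

end Distance

/-- The component of the complement of the finite vertex set `K` in which the end `e` lies. -/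
def endBranch (e : G.end) (K : Finset V) : G.ComponentCompl (K : Set V) :=
  e.val (op K)

section EndBranch

variable (e : G.end) {K L : Finset V} {v w x : V}

theorem endBranch_anti (h : K ⊆ L) : (endBranch e L : Set V) ⊆ endBranch e K := by
  have hcompat : (endBranch e L).hom h = endBranch e K := e.2 (CategoryTheory.opHomOfLE h)
  exact hcompat ▸ (endBranch e L).subset_hom h

theorem exists_forall_mem_endBranch_singleton (K : Finset V) :
    ∃ x, ∀ v ∈ K, x ∈ endBranch e {v} := by
  obtain ⟨x, hx⟩ := (endBranch e K).nonempty
  exact ⟨x, fun v hv => endBranch_anti e (Finset.singleton_subset_iff.2 hv) hx⟩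

theorem exists_adj_mem_endBranch (hG : G.Connected) (v : V) :
    ∃ w, G.Adj v w ∧ w ∈ endBranch e {v} := by
  obtain ⟨⟨w, k⟩, hw, hk, hwk⟩ := ComponentCompl.exists_adj_boundary_pair hG.preconnected
    (K := (({v} : Finset V) : Set V)) (by simp) (endBranch e {v})
  obtain rfl : k = v := by simpa using hk
  exact ⟨w, hwk.symm, hw⟩

theorem notMem_endBranch_singleton_self : v ∉ endBranch e {v} := fun h =>
  ComponentCompl.notMem_of_mem h (by simp)

theorem notMem_endBranch_singleton_iff (hG : G.IsTree) (hw : w ∈ endBranch e {v}) :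
    x ∉ endBranch e {v} ↔ G.dist x v + G.dist v w = G.dist x w := by
  rw [dist_comm (u := x) (v := w), add_comm, dist_comm (u := x), dist_comm (u := v),
    ← forall_mem_support_iff_dist_add_dist_eq hG, mem_componentCompl_iff_exists_walk hw]
  simp

theorem eq_of_notMem_endBranch (hG : G.IsTree) (hvw : v ∉ endBranch e {w})
    (hwv : w ∉ endBranch e {v}) : v = w := by
  classical
  obtain ⟨x, hx⟩ := exists_forall_mem_endBranch_singleton e {v, w}
  have hdvw := (notMem_endBranch_singleton_iff e hG (hx w (by simp))).1 hvw
  have hdwv := (notMem_endBranch_singleton_iff e hG (hx v (by simp))).1 hwv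
  rw [dist_comm] at hdwv
  exact hG.connected.dist_eq_zero_iff.1 (by omega)

end EndBranch

/-- The neighbour of `v` in the direction of the end `e`. In a tree it is unique, see
`eq_towardEnd`; in a general connected graph some such neighbour is chosen. -/
noncomputable def towardEnd (hG : G.Connected) (e : G.end) (v : V) : V :=
  (exists_adj_mem_endBranch e hG v).choose

section TowardEnd

theorem adj_towardEnd (hG : G.Connected) (e : G.end) (v : V) : G.Adj v (towardEnd hG e v) :=
  (exists_adj_mem_endBranch e hG v).choose_spec.1

theorem towardEnd_mem_endBranch (hG : G.Connected) (e : G.end) (v : V) :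
    towardEnd hG e v ∈ endBranch e {v} :=
  (exists_adj_mem_endBranch e hG v).choose_spec.2

variable (hG : G.IsTree) (e : G.end) {v w x : V}
include hG

theorem dist_towardEnd_of_notMem_endBranch (h : x ∉ endBranch e {v}) :
    G.dist x (towardEnd hG.connected e v) = G.dist x v + 1 := by
  have hmem := towardEnd_mem_endBranch hG.connected e v
  rw [← (notMem_endBranch_singleton_iff e hG hmem).1 h,
    dist_eq_one_iff_adj.2 (adj_towardEnd hG.connected e v)]

theorem dist_eq_dist_towardEnd_add_one (h : x ∈ endBranch e {v}) :
    G.dist x v = G.dist x (towardEnd hG.connected e v) + 1 := by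
  have hadj := adj_towardEnd hG.connected e v
  have hmem := towardEnd_mem_endBranch hG.connected e v
  rw [← not_not (a := x ∈ endBranch e {v}), notMem_endBranch_singleton_iff e hG hmem,
    dist_eq_one_iff_adj.2 hadj] at h
  exact (hG.dist_eq_dist_add_one_of_adj x hadj).resolve_right (Ne.symm h)

theorem eq_towardEnd_of_dist_lt (hx : x ∈ endBranch e {v}) (hvw : G.Adj v w)
    (hw : G.dist x w < G.dist x v) : w = towardEnd hG.connected e v :=
  eq_of_adj_of_dist_lt hG hvw (adj_towardEnd _ e v) hw
    (by rw [dist_eq_dist_towardEnd_add_one hG e hx]; omega)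

theorem eq_towardEnd (hvw : G.Adj v w) (hw : w ∈ endBranch e {v}) :
    w = towardEnd hG.connected e v :=
  eq_towardEnd_of_dist_lt hG e hw hvw (by rw [dist_self, dist_eq_one_iff_adj.2 hvw.symm]; omega)

theorem towardEnd_towardEnd_ne (v : V) :
    towardEnd hG.connected e (towardEnd hG.connected e v) ≠ v := by
  classical
  intro h
  obtain ⟨x, hx⟩ := exists_forall_mem_endBranch_singleton e {v, towardEnd hG.connected e v}
  have hv := dist_eq_dist_towardEnd_add_one hG e (hx v (by simp))
  have hup := dist_eq_dist_towardEnd_add_one hG e (hx (towardEnd hG.connected e v) (by simp))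
  rw [h] at hup
  omega

theorem towardEnd_eq_or_of_adj (hvw : G.Adj v w) :
    towardEnd hG.connected e v = w ∨ towardEnd hG.connected e w = v := by
  classical
  obtain ⟨x, hx⟩ := exists_forall_mem_endBranch_singleton e {v, w}
  rcases lt_or_gt_of_ne (hG.dist_ne_of_adj x hvw) with h | h
  · exact Or.inr (eq_towardEnd_of_dist_lt hG e (hx w (by simp)) hvw.symm h).symm
  · exact Or.inl (eq_towardEnd_of_dist_lt hG e (hx v (by simp)) hvw h).symm

theorem notMem_endBranch_towardEnd (h : x ∉ endBranch e {v}) :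
    x ∉ endBranch e {towardEnd hG.connected e v} := fun hx =>
  towardEnd_towardEnd_ne hG e v
    (eq_towardEnd_of_dist_lt hG e hx (adj_towardEnd _ e v).symm
      (by rw [dist_towardEnd_of_notMem_endBranch hG e h]; omega)).symm

theorem eq_of_forall_towardEnd_eq {α : Type*} {f : V → α}
    (hf : ∀ v, f (towardEnd hG.connected e v) = f v) (v w : V) : f v = f w := by
  obtain ⟨p⟩ := hG.connected.preconnected v w
  induction p with
  | nil => rfl
  | cons hadj _ ih =>
    rcases towardEnd_eq_or_of_adj hG e hadj with h | h
    · rw [← ih, ← h, hf]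
    · rw [← ih, ← h, hf]

end TowardEnd

end Graph

/-- An infinite path `r 0, r 1, …` without repeated vertices. -/
structure IsRay {V : Type*} (G : SimpleGraph V) (r : ℕ → V) : Prop where
  injective : Injective r
  adj : ∀ i, G.Adj (r i) (r (i + 1))

namespace IsRay

variable {V : Type*} {G : SimpleGraph V} {r : ℕ → V} {K : Finset V}

theorem eventually_notMem (hr : IsRay G r) (K : Finset V) : ∀ᶠ i in atTop, r i ∉ K := by
  have h := hr.injective.tendsto_cofinite.eventually K.finite_toSet.eventually_cofinite_notMem
  rwa [Nat.cofinite_eq_atTop] at h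

theorem mem_of_mem (hr : IsRay G r) {C : G.ComponentCompl (K : Set V)} {n : ℕ} (hn : r n ∈ C)
    (hK : ∀ i ≥ n, r i ∉ K) {i : ℕ} (hi : n ≤ i) : r i ∈ C := by
  induction i, hi using Nat.le_induction with
  | base => exact hn
  | succ i hi ih => exact ComponentCompl.mem_of_adj _ _ ih (hK _ (by omega)) (hr.adj i)

theorem exists_eventually_mem (hr : IsRay G r) (K : Finset V) :
    ∃ C : G.ComponentCompl (K : Set V), ∀ᶠ i in atTop, r i ∈ C := by
  obtain ⟨n, hn⟩ := eventually_atTop.1 (hr.eventually_notMem K)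
  exact ⟨G.componentComplMk (hn n le_rfl), eventually_atTop.2
    ⟨n, fun i hi => hr.mem_of_mem (G.componentComplMk_mem _) hn hi⟩⟩

/-- The end of the graph to which a ray converges: the complement of each finite set has exactly
one component that contains a tail of the ray. -/
noncomputable def toEnd (hr : IsRay G r) : G.end :=
  ⟨fun K => (hr.exists_eventually_mem K.unop).choose, fun {K L} f => by
    obtain ⟨i, hiK, hiL⟩ := ((hr.exists_eventually_mem K.unop).choose_spec.and
      (hr.exists_eventually_mem L.unop).choose_spec).exists
    exact (ComponentCompl.hom_eq_iff_not_disjoint _ (CategoryTheory.le_of_op_hom f) _).2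
      (Set.not_disjoint_iff.2 ⟨r i, hiK, hiL⟩)⟩

theorem eventually_mem_endBranch_toEnd (hr : IsRay G r) (K : Finset V) :
    ∀ᶠ i in atTop, r i ∈ endBranch hr.toEnd K :=
  (hr.exists_eventually_mem K).choose_spec

theorem succ_mem_endBranch_toEnd (hr : IsRay G r) (n : ℕ) :
    r (n + 1) ∈ endBranch hr.toEnd {r n} := by
  have havoid : ∀ i ≥ n + 1, r i ∉ ({r n} : Finset V) := fun i hi h =>
    absurd (hr.injective (Finset.mem_singleton.1 h)) (by omega)
  obtain ⟨i, hi, hni⟩ :=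
    ((hr.eventually_mem_endBranch_toEnd {r n}).and (eventually_ge_atTop (n + 1))).exists
  have hmem := G.componentComplMk_mem (havoid _ le_rfl)
  have hC : G.componentComplMk (havoid _ le_rfl) = endBranch hr.toEnd {r n} :=
    ComponentCompl.pairwise_disjoint.eq
      (Set.not_disjoint_iff.2 ⟨r i, hr.mem_of_mem hmem havoid hni, hi⟩)
  exact hC ▸ hmem

theorem eventually_dist_succ (hG : G.IsTree) (hr : IsRay G r) (u : V) :
    ∀ᶠ i in atTop, G.dist u (r (i + 1)) = G.dist u (r i) + 1 := by
  have hstep : ∀ i, G.dist u (r (i + 1)) = G.dist u (r i) + 1 →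
      G.dist u (r (i + 2)) = G.dist u (r (i + 1)) + 1 := by
    intro i hi
    refine (hG.dist_eq_dist_add_one_of_adj u (hr.adj (i + 1))).resolve_left fun hback => ?_
    have : r i = r (i + 2) :=
      eq_of_adj_of_dist_lt hG (hr.adj i).symm (hr.adj (i + 1)) (u := u) (hi ▸ Nat.lt_succ_self _)
        (hback ▸ Nat.lt_succ_self _)
    exact absurd (hr.injective this) (by omega)
  have hincrease : ∃ i, G.dist u (r (i + 1)) = G.dist u (r i) + 1 := by
    by_contra! hne
    have hle : ∀ i, G.dist u (r (i + 1)) ≤ G.dist u (r i) := fun i => by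
      have := (hG.dist_eq_dist_add_one_of_adj u (hr.adj i)).resolve_right (hne i)
      omega
    obtain ⟨i, hi⟩ :=
      (eventually_eq_of_succ_le (f := fun i => G.dist u (r i)) (.of_forall hle)).exists
    exact hG.dist_ne_of_adj u (hr.adj i) hi.symm
  obtain ⟨n, hn⟩ := hincrease
  refine eventually_atTop.2 ⟨n, fun i hi => ?_⟩
  induction i, hi using Nat.le_induction with
  | base => exact hn
  | succ i _ ih => exact hstep i ih

end IsRay

/-- All sufficiently late vertices of the sequence `r` have no neighbours except their predecessor
and their successor in `r`. -/
def EventuallyUnbranched {V : Type*} (G : SimpleGraph V) (r : ℕ → V) : Prop :=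
  ∀ᶠ i in atTop, ∀ w, G.Adj (r (i + 1)) w → w = r i ∨ w = r (i + 2)

section IsolatedEnd

variable {V : Type} {G : SimpleGraph V} {r : ℕ → V}

theorem isOpen_setOf_endBranch_eq (K : Finset V) (C : G.ComponentCompl (K : Set V)) :
    @IsOpen G.end (endTop G) {e | endBranch e K = C} := by
  have hle : endTop G ≤ TopologicalSpace.induced (fun e : G.end => endBranch e K) ⊥ := by
    rw [endTop, induced_iInf]
    refine (iInf_le _ (op K)).trans ?_
    rw [induced_compose]
    rfl
  exact hle _ ⟨{C}, @isOpen_discrete _ ⊥ (@DiscreteTopology.mk _ ⊥ rfl) _, rfl⟩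

theorem IsRay.eq_toEnd_of_endBranch_subset_range (hr : IsRay G r) {e : G.end} {K : Finset V}
    (hK : (endBranch e K : Set V) ⊆ Set.range r) : e = hr.toEnd := by
  classical
  refine Subtype.ext (funext fun L => ?_)
  have hinfinite : (r ⁻¹' endBranch e (K ∪ L.unop)).Infinite :=
    (end_componentCompl_infinite G e (op (K ∪ L.unop))).preimage
      ((endBranch_anti e Finset.subset_union_left).trans hK)
  obtain ⟨i, hie, hir⟩ := ((Nat.frequently_atTop_iff_infinite.2 hinfinite).and_eventually
    (hr.eventually_mem_endBranch_toEnd L.unop)).exists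
  exact ComponentCompl.pairwise_disjoint.eq
    (Set.not_disjoint_iff.2 ⟨r i, endBranch_anti e Finset.subset_union_right hie, hir⟩)

theorem EventuallyUnbranched.exists_endBranch_subset_range (hr : IsRay G r)
    (hub : EventuallyUnbranched G r) : ∃ n, (endBranch hr.toEnd {r n} : Set V) ⊆ Set.range r := by
  obtain ⟨n, hn⟩ := eventually_atTop.1 hub
  refine ⟨n, (componentCompl_subset_of_forall_adj (s := r '' Set.Ioi n)
    (hr.succ_mem_endBranch_toEnd n) ⟨n + 1, Nat.lt_succ_self n, rfl⟩ ?_).trans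
    (Set.image_subset_range _ _)⟩
  rintro _ ⟨i, hi, rfl⟩ z hz hadj
  obtain ⟨j, rfl⟩ := Nat.exists_eq_add_of_lt hi
  rcases hn (n + j) (by omega) z hadj with rfl | rfl
  · have hj : n + j ≠ n := fun h => hz (by simp [h])
    exact ⟨n + j, by simp only [Set.mem_Ioi]; omega, rfl⟩
  · exact ⟨n + j + 2, by simp only [Set.mem_Ioi]; omega, rfl⟩

theorem EventuallyUnbranched.isIsolatedEnd_toEnd (hr : IsRay G r)
    (hub : EventuallyUnbranched G r) : IsIsolatedEnd G hr.toEnd := by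
  obtain ⟨n, hn⟩ := hub.exists_endBranch_subset_range hr
  have hsingleton : {hr.toEnd} = {e | endBranch e {r n} = endBranch hr.toEnd {r n}} :=
    Set.Subset.antisymm (Set.singleton_subset_iff.2 rfl) fun e he =>
      hr.eq_toEnd_of_endBranch_subset_range ((congrArg _ he).trans_subset hn)
  rw [IsIsolatedEnd, hsingleton]
  exact isOpen_setOf_endBranch_eq _ _

end IsolatedEnd

namespace TreeDyn

variable {V : Type} (T : TreeDyn V)

section Covering

theorem dist_image_le (x y : V) : T.G.dist (T.F x) (T.F y) ≤ T.G.dist x y := by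
  obtain ⟨p, hp⟩ := T.isTree.connected.exists_walk_length_eq_dist x y
  rw [← hp]
  simpa using dist_le (p.map ⟨T.F, fun h => T.adjMap h⟩ : T.G.Walk (T.F x) (T.F y))

theorem exists_image_eq_dist_le_length {y z : V} (p : T.G.Walk y z) {x : V} (hx : T.F x = y) :
    ∃ u, T.F u = z ∧ T.G.dist x u ≤ p.length := by
  induction p generalizing x with
  | nil => exact ⟨x, hx, by simp⟩
  | cons hadj p ih =>
    subst hx
    obtain ⟨w, hxw, hw⟩ := T.edgeSurj hadj
    obtain ⟨u, hu, hwu⟩ := ih hw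
    refine ⟨u, hu, ?_⟩
    calc T.G.dist x u ≤ T.G.dist x w + T.G.dist w u := T.isTree.connected.dist_triangle
      _ ≤ 1 + p.length := add_le_add (dist_eq_one_iff_adj.2 hxw).le hwu
      _ = (Walk.cons hadj p).length := by rw [Walk.length_cons, add_comm]

theorem exists_image_eq_dist_le (x z : V) :
    ∃ u, T.F u = z ∧ T.G.dist x u ≤ T.G.dist (T.F x) z := by
  obtain ⟨p, hp⟩ := T.isTree.connected.exists_walk_length_eq_dist (T.F x) z
  exact hp ▸ T.exists_image_eq_dist_le_length p rfl

theorem surjective : Surjective T.F := fun z =>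
  (T.exists_image_eq_dist_le z z).imp fun _ h => h.1

theorem ncard_neighborSet_image_le (v : V) :
    (T.G.neighborSet (T.F v)).ncard ≤ (T.G.neighborSet v).ncard :=
  (Set.ncard_le_ncard (fun _ hw => T.edgeSurj hw) ((T.locFin v).image T.F)).trans
    (Set.ncard_image_le (T.locFin v))

theorem three_le_ncard_neighborSet {v a b c : V} (ha : T.G.Adj v a) (hb : T.G.Adj v b)
    (hc : T.G.Adj v c) (hab : a ≠ b) (hac : a ≠ c) (hbc : b ≠ c) :
    3 ≤ (T.G.neighborSet v).ncard := by
  rw [← Set.ncard_eq_three.2 ⟨a, b, c, hab, hac, hbc, rfl⟩]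
  refine Set.ncard_le_ncard ?_ (T.locFin v)
  rintro x (rfl | rfl | rfl) <;> assumption

end Covering

section Height

/-- The neighbour of `v` that is one step closer to the distinguished end `infty`. -/
noncomputable abbrev up (infty : T.G.end) : V → V :=
  towardEnd T.isTree.connected infty

variable {T} {infty : T.G.end} {v₀ v : V}

theorem below_iff_notMem_endBranch {x : V} :
    T.Below infty v x ↔ x ∉ endBranch infty {v} := by
  constructor
  · rintro (rfl | ⟨_, hne⟩)
    · exact notMem_endBranch_singleton_self infty
    · exact fun hx => hne hx.choose_spec
  · intro h
    by_cases hx : x = v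
    · exact Or.inl hx
    · exact Or.inr ⟨by simpa using hx, fun heq => h ⟨_, heq⟩⟩

theorem height_of_notMem_endBranch (h : v₀ ∉ endBranch infty {v}) :
    T.height infty v₀ v = T.G.dist v₀ v :=
  if_pos (below_iff_notMem_endBranch.2 h)

theorem height_of_mem_endBranch (h : v₀ ∈ endBranch infty {v}) :
    T.height infty v₀ v = -T.G.dist v₀ v :=
  if_neg fun h' => below_iff_notMem_endBranch.1 h' h

theorem abs_height : |T.height infty v₀ v| = T.G.dist v₀ v := by
  by_cases h : v₀ ∈ endBranch infty {v}
  · rw [height_of_mem_endBranch h, abs_neg, Nat.abs_cast]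
  · rw [height_of_notMem_endBranch h, Nat.abs_cast]

theorem height_eq_zero_iff : T.height infty v₀ v = 0 ↔ v = v₀ := by
  rw [← abs_eq_zero, abs_height, Nat.cast_eq_zero, T.isTree.connected.dist_eq_zero_iff, eq_comm]

theorem IsBase.height_nonpos (hbase : T.IsBase infty v₀)
    (hv : 3 ≤ (T.G.neighborSet v).ncard) : T.height infty v₀ v ≤ 0 := by
  by_cases h : v₀ ∈ endBranch infty {v}
  · rw [height_of_mem_endBranch h]
    omega
  · have hv₀ : v = v₀ := eq_of_notMem_endBranch infty T.isTree
      (below_iff_notMem_endBranch.1 (hbase.2 v hv)) h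
    exact (height_eq_zero_iff.2 hv₀).le

theorem IsBase.mem_endBranch_up (hbase : T.IsBase infty v₀) (hv : v₀ ∈ endBranch infty {v})
    (hne : T.up infty v ≠ v₀) : v₀ ∈ endBranch infty {T.up infty v} := by
  by_contra hnot
  obtain ⟨y, hy, hdist⟩ := exists_adj_dist_eq_add_one T.isTree.connected hne.symm
  have hup : T.G.dist v₀ v = T.G.dist v₀ (T.up infty v) + 1 :=
    dist_eq_dist_towardEnd_add_one T.isTree infty hv
  have hupup : T.G.dist v₀ (T.up infty (T.up infty v)) = T.G.dist v₀ (T.up infty v) + 1 :=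
    dist_towardEnd_of_notMem_endBranch T.isTree infty hnot
  have hvalence : 3 ≤ (T.G.neighborSet (T.up infty v)).ncard :=
    T.three_le_ncard_neighborSet (a := T.up infty (T.up infty v)) (adj_towardEnd _ infty _)
      (adj_towardEnd _ infty v).symm hy (towardEnd_towardEnd_ne T.isTree infty v)
      (by rintro rfl; omega) (by rintro rfl; omega)
  exact hne (eq_of_notMem_endBranch infty T.isTree
    (below_iff_notMem_endBranch.1 (hbase.2 _ hvalence)) hnot)

theorem IsBase.height_up (hbase : T.IsBase infty v₀) (v : V) :
    T.height infty v₀ (T.up infty v) = T.height infty v₀ v + 1 := by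
  by_cases hv : v₀ ∈ endBranch infty {v}
  · have hdist := dist_eq_dist_towardEnd_add_one T.isTree infty hv
    have hup : T.height infty v₀ (T.up infty v) = -T.G.dist v₀ (T.up infty v) := by
      rcases eq_or_ne (T.up infty v) v₀ with h | h
      · rw [height_eq_zero_iff.2 h, h, dist_self, Nat.cast_zero, neg_zero]
      · exact height_of_mem_endBranch (hbase.mem_endBranch_up hv h)
    rw [hup, height_of_mem_endBranch hv, hdist]
    push_cast
    ring
  · rw [height_of_notMem_endBranch hv,
      height_of_notMem_endBranch (notMem_endBranch_towardEnd T.isTree infty hv),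
      dist_towardEnd_of_notMem_endBranch T.isTree infty hv, Nat.cast_succ]

theorem IsBase.height_iterate_up (hbase : T.IsBase infty v₀) (v : V) (n : ℕ) :
    T.height infty v₀ ((T.up infty)^[n] v) = T.height infty v₀ v + n := by
  induction n with
  | zero => simp
  | succ n ih => rw [iterate_succ_apply', hbase.height_up, ih, Nat.cast_succ, add_assoc]

theorem IsBase.isRay_iterate_up (hbase : T.IsBase infty v₀) (v : V) :
    IsRay T.G fun n => (T.up infty)^[n] v where
  injective m n hmn := by
    have := congrArg (T.height infty v₀) hmn
    simpa only [hbase.height_iterate_up, add_right_inj, Nat.cast_inj] using this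
  adj n := by
    rw [iterate_succ_apply']
    exact adj_towardEnd _ _ _

theorem IsBase.eventuallyUnbranched_iterate_up (hbase : T.IsBase infty v₀) (v : V) :
    EventuallyUnbranched T.G fun n => (T.up infty)^[n] v := by
  refine eventually_atTop.2 ⟨(T.height infty v₀ v).natAbs, fun n hn w hw => ?_⟩
  have hray := hbase.isRay_iterate_up v
  by_contra! hne
  have hnonpos := hbase.height_nonpos (T.three_le_ncard_neighborSet hw (hray.adj n).symm
    (hray.adj (n + 1)) hne.1 hne.2 (hray.injective.ne (by omega)))
  rw [hbase.height_iterate_up] at hnonpos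
  omega

end Height

section LocalDegree

/-- A local degree function without the Riemann–Hurwitz inequality: `dE` is symmetric and positive
on edges, and for every edge at `v` the degrees of the edges at `v` with the same image add up to
`dV v`. -/
structure IsWeakLocalDeg (dV : V → ℕ) (dE : V → V → ℕ) : Prop where
  symm : ∀ v w, dE v w = dE w v
  pos : ∀ ⦃v w⦄, T.G.Adj v w → 0 < dE v w
  eq_finsum : ∀ ⦃v w⦄, T.G.Adj v w →
    dV v = ∑ᶠ w' ∈ {w' : V | T.G.Adj v w' ∧ T.F w' = T.F w}, dE v w'

variable {T} {dV : V → ℕ} {dE : V → V → ℕ} {v a b : V}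

theorem IsLocalDeg.isWeakLocalDeg (hdeg : T.IsLocalDeg dV dE) : T.IsWeakLocalDeg dV dE :=
  ⟨hdeg.1, hdeg.2.2.1, hdeg.2.2.2.2⟩

namespace IsWeakLocalDeg

theorem sum_le (hdeg : T.IsWeakLocalDeg dV dE) (ha : T.G.Adj v a) {s : Finset V}
    (hs : ∀ b ∈ s, T.G.Adj v b ∧ T.F b = T.F a) : ∑ b ∈ s, dE v b ≤ dV v := by
  have hfin : {b | T.G.Adj v b ∧ T.F b = T.F a}.Finite := (T.locFin v).subset fun b hb => hb.1
  rw [hdeg.eq_finsum ha, finsum_mem_eq_finite_toFinset_sum _ hfin]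
  exact Finset.sum_le_sum_of_subset fun b hb => hfin.mem_toFinset.2 (hs b hb)

theorem edge_le_vertex (hdeg : T.IsWeakLocalDeg dV dE) (ha : T.G.Adj v a) : dE v a ≤ dV v := by
  simpa using hdeg.sum_le ha (s := {a}) (by simpa using ha)

theorem edge_lt_vertex (hdeg : T.IsWeakLocalDeg dV dE) (ha : T.G.Adj v a) (hb : T.G.Adj v b)
    (hab : a ≠ b) (hF : T.F a = T.F b) : dE v b < dV v := by
  classical
  have hsum := hdeg.sum_le hb (s := {a, b}) (by simp [ha, hb, hF])
  rw [Finset.sum_pair hab] at hsum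
  exact (Nat.lt_add_of_pos_left (hdeg.pos ha)).trans_le hsum

theorem vertex_eq_edge (hdeg : T.IsWeakLocalDeg dV dE) (ha : T.G.Adj v a)
    (hunique : ∀ b, T.G.Adj v b → T.F b = T.F a → b = a) : dV v = dE v a := by
  have hsingleton : {b | T.G.Adj v b ∧ T.F b = T.F a} = {a} :=
    Set.eq_singleton_iff_unique_mem.2 ⟨⟨ha, rfl⟩, fun b hb => hunique b hb.1 hb.2⟩
  rw [hdeg.eq_finsum ha, hsingleton, finsum_mem_singleton]

end IsWeakLocalDeg

variable {r : ℕ → V}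

-- Each `a` in question is as close to the fibre over `T.F (r 0)` as `r i`. That fibre is finite,
-- so from some point on `r` moves away from all of it at once and `r i` is the only such `a`.
theorem eventually_eq_of_image_eq_prev (hr : IsRay T.G r) :
    ∀ᶠ i in atTop, ∀ a, T.G.Adj (r (i + 1)) a → T.F a = T.F (r i) → a = r i := by
  have hescape := (eventually_all_finite (T.finFibers (T.F (r 0)))).2 fun u _ =>
    hr.eventually_dist_succ T.isTree u
  filter_upwards [hescape] with i hi a ha hFa
  obtain ⟨u, hu, hdist⟩ := T.exists_image_eq_dist_le a (T.F (r 0))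
  have hclose : T.G.dist u a ≤ T.G.dist u (r i) :=
    calc T.G.dist u a = T.G.dist a u := dist_comm
      _ ≤ T.G.dist (T.F a) (T.F (r 0)) := hdist
      _ = T.G.dist (T.F u) (T.F (r i)) := by rw [hFa, hu, dist_comm]
      _ ≤ T.G.dist u (r i) := T.dist_image_le u (r i)
  have haway := hi u hu
  exact eq_of_adj_of_dist_lt T.isTree ha (hr.adj i).symm (u := u) (by omega) (by omega)

theorem IsWeakLocalDeg.eventually_edge_eq_vertex (hdeg : T.IsWeakLocalDeg dV dE)
    (hr : IsRay T.G r) :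
    ∀ᶠ i in atTop, dE (r (i + 1)) (r (i + 2)) = dV (r (i + 1)) := by
  have hback : ∀ᶠ i in atTop, dV (r (i + 2)) = dE (r (i + 1)) (r (i + 2)) := by
    filter_upwards [(tendsto_add_atTop_nat 1).eventually (eventually_eq_of_image_eq_prev hr)]
      with i hi
    rw [hdeg.vertex_eq_edge (hr.adj (i + 1)).symm hi, hdeg.symm]
  have hconst := eventually_eq_of_succ_le (f := fun i => dV (r (i + 1)))
    (hback.mono fun i hi => hi.trans_le (hdeg.edge_le_vertex (hr.adj (i + 1))))
  filter_upwards [hback, hconst] with i hi hi'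
  exact hi.symm.trans hi'

theorem IsWeakLocalDeg.eventually_eq_of_image_eq_next (hdeg : T.IsWeakLocalDeg dV dE)
    (hr : IsRay T.G r) :
    ∀ᶠ i in atTop, ∀ a, T.G.Adj (r (i + 1)) a → T.F a = T.F (r (i + 2)) → a = r (i + 2) := by
  filter_upwards [hdeg.eventually_edge_eq_vertex hr] with i hi a ha hFa
  by_contra hne
  exact (hdeg.edge_lt_vertex ha (hr.adj (i + 1)) hne hFa).ne hi

theorem IsWeakLocalDeg.eventuallyUnbranched_of_image (hdeg : T.IsWeakLocalDeg dV dE)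
    (hr : IsRay T.G r) (hub : EventuallyUnbranched T.G (T.F ∘ r)) :
    EventuallyUnbranched T.G r := by
  filter_upwards [hub, eventually_eq_of_image_eq_prev hr, hdeg.eventually_eq_of_image_eq_next hr]
    with i himage hprev hnext w hw
  exact (himage _ (T.adjMap hw)).imp (hprev w hw) (hnext w hw)

end LocalDegree

section Semiconj

variable {T} {infty : T.G.end} {v₀ : V} {dV : V → ℕ} {dE : V → V → ℕ}

theorem IsBase.eq_up_of_semiconj (hbase : T.IsBase infty v₀) (hdeg : T.IsWeakLocalDeg dV dE)
    (hunique : ∀ e, IsIsolatedEnd T.G e → e = infty) {s : V → V} (hadj : ∀ x, T.G.Adj x (s x))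
    (hs : Semiconj T.F s (T.up infty)) : s = T.up infty := by
  funext v
  have himage : T.F ∘ (fun n => s^[n] v) = fun n => (T.up infty)^[n] (T.F v) :=
    funext fun n => hs.iterate_right n v
  have hr : IsRay T.G fun n => s^[n] v :=
    { injective := .of_comp (f := T.F) (himage ▸ (hbase.isRay_iterate_up (T.F v)).injective)
      adj := fun n => by simpa only [iterate_succ_apply'] using hadj (s^[n] v) }
  have hub := hdeg.eventuallyUnbranched_of_image hr
    (himage ▸ hbase.eventuallyUnbranched_iterate_up (T.F v))
  have hend : hr.toEnd = infty := hunique _ (hub.isIsolatedEnd_toEnd hr)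
  exact eq_towardEnd T.isTree infty (hadj v) (hend ▸ hr.succ_mem_endBranch_toEnd 0)

theorem IsBase.semiconj_up (hbase : T.IsBase infty v₀) (hdeg : T.IsWeakLocalDeg dV dE)
    (hunique : ∀ e, IsIsolatedEnd T.G e → e = infty) :
    Semiconj T.F (T.up infty) (T.up infty) := by
  choose s hadj hs using fun x => T.edgeSurj (adj_towardEnd T.isTree.connected infty (T.F x))
  have hlift : Semiconj T.F s (T.up infty) := hs
  rwa [hbase.eq_up_of_semiconj hdeg hunique hadj hlift] at hlift

theorem IsBase.height_image (hbase : T.IsBase infty v₀)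
    (hup : Semiconj T.F (T.up infty) (T.up infty)) (v : V) :
    T.height infty v₀ (T.F v) = T.height infty v₀ v + T.height infty v₀ (T.F v₀) := by
  have hconst := eq_of_forall_towardEnd_eq T.isTree infty
    (f := fun v => T.height infty v₀ (T.F v) - T.height infty v₀ v)
    (fun v => by rw [hup, hbase.height_up, hbase.height_up, add_sub_add_right_eq_sub]) v v₀
  rw [height_eq_zero_iff.2 rfl, sub_zero] at hconst
  rw [← hconst, add_sub_cancel]

theorem IsBase.height_image_base_nonneg (hbase : T.IsBase infty v₀)
    (hup : Semiconj T.F (T.up infty) (T.up infty)) : 0 ≤ T.height infty v₀ (T.F v₀) := by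
  obtain ⟨y, hy⟩ := T.surjective v₀
  have hvalence := hbase.1.trans (hy ▸ T.ncard_neighborSet_image_le y)
  have himage := hbase.height_image hup y
  rw [hy, height_eq_zero_iff.2 rfl] at himage
  have := hbase.height_nonpos hvalence
  omega

theorem IsPolyLike.image_base_ne (hpl : T.IsPolyLike infty) (hbase : T.IsBase infty v₀) :
    T.F v₀ ≠ v₀ := by
  intro hfix
  obtain ⟨⟨_, _, hdeg⟩, -, hunique, -, hbranch⟩ := hpl
  have hup := hbase.semiconj_up hdeg.isWeakLocalDeg hunique
  have hinvariant : T.height infty v₀ ∘ T.F = T.height infty v₀ := funext fun v => by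
    rw [comp_apply, hbase.height_image hup, height_eq_zero_iff.2 hfix, add_zero]
  have hiterate : ∀ n v, T.height infty v₀ (T.F^[n] v) = T.height infty v₀ v := fun n =>
    congrFun (iterate_invariant hinvariant n)
  obtain ⟨w, ⟨n, m, -, -, horbit⟩, hw⟩ := hbranch (T.up infty v₀)
  have hheight : T.height infty v₀ w = 1 := by
    rw [← hiterate m, ← horbit, hiterate, hbase.height_up, height_eq_zero_iff.2 rfl, zero_add]
  exact absurd (hbase.height_nonpos hw) (by rw [hheight]; decide)

end Semiconj

end TreeDyn

theorem height_of_image_eq_add_const_general {V : Type} (T : TreeDyn V) (infty : T.G.end)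
    {dV : V → ℕ} {dE : V → V → ℕ} (hdeg : T.IsWeakLocalDeg dV dE)
    (hunique : ∀ e, IsIsolatedEnd T.G e → e = infty) {v₀ : V} (hbase : T.IsBase infty v₀)
    (hF : T.F v₀ ≠ v₀) :
    ∃ N : ℕ, 0 < N ∧ ∀ v : V,
      T.height infty v₀ (T.F v) = T.height infty v₀ v + (N : ℤ) := by
  have hup := hbase.semiconj_up hdeg hunique
  obtain ⟨N, hN⟩ := Int.eq_ofNat_of_zero_le (hbase.height_image_base_nonneg hup)
  refine ⟨N, Nat.pos_of_ne_zero ?_, fun v => hN ▸ hbase.height_image hup v⟩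
  rintro rfl
  exact hF (TreeDyn.height_eq_zero_iff.1 hN)

/-- **The combinatorial height is translated by a constant.**
Let `F : T → T` be a polynomial-like branched covering of a simplicial tree,
with distinguished isolated end `infty` and base `v₀`.  Then there is an
integer `N(F) > 0` with `h(F v) = h(v) + N(F)` for every vertex `v`, where
`h` is the combinatorial height. -/
theorem height_of_image_eq_add_const
    {V : Type} (T : TreeDyn V) (infty : T.G.end)
    (hpl : T.IsPolyLike infty) (v₀ : V) (hbase : T.IsBase infty v₀) :
    ∃ N : ℕ, 0 < N ∧ ∀ v : V,
      T.height infty v₀ (T.F v) = T.height infty v₀ v + (N : ℤ) := by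
  obtain ⟨_, _, hdeg⟩ := hpl.1
  exact height_of_image_eq_add_const_general T infty hdeg.isWeakLocalDeg hpl.2.2.1 hbase
    (hpl.image_base_ne hbase)
end

section
/- Let F : T → T be a polynomial-like branched covering of a simplicial tree with local degree function deg. Then for every vertex v, the upper edge e of v satisfies deg(e) = deg(v); and if h(v) ≥ 0 (v lies on the ray from the base to ∞), then deg(v) = deg(F), the global degree. -/
open SimpleGraph Function Opposite

/-!
The heart of the matter is that `F` preserves the direction towards `∞`. Suppose instead that `F`
sends the upper edge of some vertex `x` to a lower edge of `F x`. Lifting the ray from `F x` to `∞`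
then produces a sequence descending from `x`. Far out, the ray passes through vertices of valence
two only. There the number of vertices that lie over a given vertex of the ray and are reversed in
this way is bounded by the global degree and nondecreasing, hence eventually constant, so each of
them has a single continuation downwards. The degrees along the sequence are then nondecreasing,
hence eventually constant too, and this leaves each vertex of the sequence with only two neighbours.
So the sequence converges to an isolated end other than `∞`, which is absurd.

Since `F` commutes with moving up, the upper edge of `v` is alone over its image among the edges at
`v`, and a vertex above the base is alone in its fibre.
-/

universe u

section ComponentCompl

variable {V : Type u} {G : SimpleGraph V} {K : Set V} {C D : G.ComponentCompl K} {x y z : V}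

theorem componentCompl_eq_of_mem (hC : x ∈ C) (hD : x ∈ D) : C = D :=
  hC.choose_spec.symm.trans hD.choose_spec

theorem exists_isPath_of_mem_componentCompl (hx : x ∈ C) (hy : y ∈ C) :
    ∃ p : G.Walk x y, p.IsPath ∧ ∀ v ∈ p.support, v ∉ K := by
  classical
  obtain ⟨hxK, hx⟩ := hx
  obtain ⟨hyK, hy⟩ := hy
  obtain ⟨p⟩ := ConnectedComponent.exact (hx.trans hy.symm)
  let q : G.Walk x y := p.map (Embedding.induce Kᶜ).toHom
  refine ⟨q.bypass, q.bypass_isPath, fun v hv => ?_⟩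
  have hvq : v ∈ q.support := q.support_bypass_subset_support hv
  rw [show q.support = _ from Walk.support_map _ p, List.mem_map] at hvq
  obtain ⟨a, -, rfl⟩ := hvq
  exact a.2

theorem mem_componentCompl_of_walk (p : G.Walk x y) (hp : ∀ v ∈ p.support, v ∉ K)
    (hy : y ∈ C) : x ∈ C := by
  induction p with
  | nil => exact hy
  | cons h p ih =>
    rw [Walk.support_cons, List.forall_mem_cons] at hp
    exact ComponentCompl.mem_of_adj _ _ (ih hp.2 hy) hp.1 h.symm

theorem mem_componentCompl_of_forall_dist_lt (hxz : G.Reachable x z) (hz : z ∈ C)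
    (hlt : ∀ v ∈ K, G.dist x z < G.dist v z) : x ∈ C := by
  classical
  obtain ⟨p, hp⟩ := hxz.exists_walk_length_eq_dist
  refine mem_componentCompl_of_walk p (fun v hv hvK => ?_) hz
  have hle : G.dist v z ≤ G.dist x z :=
    hp ▸ (G.dist_le _).trans (p.length_dropUntil_le_length hv)
  exact (hlt v hvK).not_ge hle

theorem componentCompl_subset_of_adj_closed {S : Set V} (hx : x ∈ C) (hxS : x ∈ S)
    (hS : ∀ a ∈ S, ∀ b ∉ K, G.Adj a b → b ∈ S) : (C : Set V) ⊆ S := by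
  intro y hy
  by_contra hyS
  obtain ⟨p, -, hp⟩ := exists_isPath_of_mem_componentCompl hx hy
  obtain ⟨d, hd, hfst, hsnd⟩ := p.exists_boundary_dart S hxS hyS
  exact hsnd (hS _ hfst _ (hp _ (p.dart_snd_mem_support_of_mem_darts hd)) d.adj)

theorem mem_componentCompl_iff_of_ray {c : ℕ → V} (hadj : ∀ n, G.Adj (c n) (c (n + 1))) {N n : ℕ}
    (hK : ∀ m ≥ N, c m ∉ K) (hn : N ≤ n) : c n ∈ C ↔ c N ∈ C := by
  induction n, hn using Nat.le_induction with
  | base => rfl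
  | succ n hn ih =>
    rw [← ih]
    exact ⟨fun h => ComponentCompl.mem_of_adj _ _ h (hK n hn) (hadj n).symm,
      fun h => ComponentCompl.mem_of_adj _ _ h (hK (n + 1) (by omega)) (hadj n)⟩

theorem eq_of_adj_of_mem_componentCompl (hG : G.IsAcyclic) {v : V} (hv : v ∈ K)
    (hvx : G.Adj v x) (hvy : G.Adj v y) (hx : x ∈ C) (hy : y ∈ C) : x = y := by
  obtain ⟨p, hp, hpK⟩ := exists_isPath_of_mem_componentCompl hx hy
  have hvp : (Walk.cons hvx p).IsPath := hp.cons fun hmem => hpK v hmem hv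
  simpa using (hG.eq_snd_of_adj_start hvp hvy (by simp)).symm

end ComponentCompl

section Ends

open Filter

variable {V : Type u} {G : SimpleGraph V} {p e : G.end} {c : ℕ → V}

/-- The component of the complement of `K` in which the end `e` lies. -/
def endComponent (e : G.end) (K : Finset V) : G.ComponentCompl (K : Set V) :=
  e.val (op K)

theorem mem_endComponent_anti {K L : Finset V} (h : K ⊆ L) {z : V} (hz : z ∈ endComponent e L) :
    z ∈ endComponent e K := by
  obtain ⟨hzL, hz⟩ := hz
  exact ⟨fun hK => hzL (h hK),
    (end_hom_mk_of_mk G e.2 (CategoryTheory.opHomOfLE h) hzL hz.symm).symm⟩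

/-- Convergence of a sequence of vertices to an end, with respect to the topology on the union
of the vertex set and the space of ends. -/
def ConvergesToEnd (c : ℕ → V) (p : G.end) : Prop :=
  ∀ K : Finset V, ∀ᶠ n in atTop, c n ∈ endComponent p K

theorem eventually_notMem_of_injective (hc : Injective c) (K : Finset V) :
    ∃ N, ∀ n ≥ N, c n ∉ K := by
  have h := hc.tendsto_cofinite.eventually K.eventually_cofinite_notMem
  rwa [Nat.cofinite_eq_atTop, eventually_atTop] at h

theorem exists_convergesToEnd (hc : Injective c) (hadj : ∀ n, G.Adj (c n) (c (n + 1))) :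
    ∃ p : G.end, ConvergesToEnd c p := by
  choose N hN using eventually_notMem_of_injective hc
  let C (K : Finset V) : G.ComponentCompl (K : Set V) := G.componentComplMk (hN K _ le_rfl)
  have hC (K : Finset V) : ∀ n ≥ N K, c n ∈ C K := fun n hn =>
    (mem_componentCompl_iff_of_ray hadj (hN K) hn).2 (componentComplMk_mem G _)
  refine ⟨⟨fun K => C K.unop, fun {L K} f => ?_⟩,
    fun K => eventually_atTop.2 ⟨N K, hC K⟩⟩
  have hKL : (K.unop : Set V) ⊆ (L.unop : Set V) := CategoryTheory.le_of_op_hom f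
  exact componentCompl_eq_of_mem
    (ComponentCompl.subset_hom _ hKL (hC L.unop (max (N L.unop) (N K.unop)) (le_max_left _ _)))
    (hC K.unop _ (le_max_right _ _))

theorem ConvergesToEnd.mem_endComponent (hp : ConvergesToEnd c p)
    (hadj : ∀ n, G.Adj (c n) (c (n + 1))) {K : Finset V} {N : ℕ} (hK : ∀ n ≥ N, c n ∉ K) :
    c N ∈ endComponent p K := by
  obtain ⟨n, hn, hNn⟩ := ((hp K).and (eventually_ge_atTop N)).exists
  exact (mem_componentCompl_iff_of_ray hadj hK hNn).1 hn

theorem ConvergesToEnd.eq_of_frequently (hp : ConvergesToEnd c p)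
    (he : ∀ K : Finset V, ∃ᶠ n in atTop, c n ∈ endComponent e K) : e = p := by
  refine Subtype.ext (funext fun K => ?_)
  obtain ⟨n, hne, hnp⟩ := ((he K.unop).and_eventually (hp K.unop)).exists
  exact componentCompl_eq_of_mem hne hnp

end Ends

section IsolatedEnds

open Filter

variable {V : Type} {G : SimpleGraph V} {p : G.end} {c : ℕ → V}

theorem isIsolatedEnd_of_forall_endComponent_eq (K : Finset V)
    (h : ∀ e : G.end, endComponent e K = endComponent p K → e = p) : IsIsolatedEnd G p := by
  refine ⟨{f | f (op K) = p.val (op K)}, ?_, ?_⟩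
  · exact iInf_le (fun K : (Finset V)ᵒᵖ => TopologicalSpace.induced
      (fun f : (j : (Finset V)ᵒᵖ) → G.componentComplFunctor.obj j => f K) ⊥) (op K) _
      ⟨{p.val (op K)}, trivial, rfl⟩
  · ext e
    exact ⟨fun he => h e he, fun he => by rw [Set.mem_singleton_iff.1 he]; rfl⟩

theorem isIsolatedEnd_of_endComponent_subset_range (hp : ConvergesToEnd c p) {K : Finset V}
    (hK : (endComponent p K : Set V) ⊆ Set.range c) : IsIsolatedEnd G p := by
  classical
  refine isIsolatedEnd_of_forall_endComponent_eq K fun e he =>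
    hp.eq_of_frequently fun L => frequently_atTop.2 fun N => ?_
  obtain ⟨z, hz⟩ := (endComponent e (K ∪ L ∪ (Finset.range N).image c)).nonempty
  have hzK : z ∈ endComponent p K := he ▸ mem_endComponent_anti (by grind) hz
  obtain ⟨n, rfl⟩ := hK hzK
  refine ⟨n, ?_, mem_endComponent_anti (by grind) hz⟩
  by_contra! hn
  exact ComponentCompl.notMem_of_mem hz (by simpa using .inr (.inr ⟨n, hn, rfl⟩))

/-- The component containing the tail of the ray is the ray itself. -/
theorem exists_isIsolatedEnd_of_thin_ray (hc : Injective c) (hadj : ∀ n, G.Adj (c n) (c (n + 1)))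
    (hthin : ∀ n z, G.Adj (c (n + 1)) z → z = c n ∨ z = c (n + 2)) :
    ∃ p : G.end, IsIsolatedEnd G p ∧ c 1 ∈ endComponent p {c 0} := by
  obtain ⟨p, hp⟩ := exists_convergesToEnd hc hadj
  have hmem : c 1 ∈ endComponent p {c 0} := hp.mem_endComponent hadj fun n hn h => by
    have := hc (Finset.mem_singleton.1 h)
    omega
  have hsub : (endComponent p {c 0} : Set V) ⊆ Set.range fun n => c (n + 1) := by
    refine componentCompl_subset_of_adj_closed hmem ⟨0, rfl⟩ ?_
    rintro _ ⟨n, rfl⟩ b hb h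
    rcases hthin n b h with rfl | rfl
    · cases n with
      | zero => simp at hb
      | succ n => exact ⟨n, rfl⟩
    · exact ⟨n + 1, rfl⟩
  exact ⟨p, isIsolatedEnd_of_endComponent_subset_range hp
    (hsub.trans (Set.range_comp_subset_range _ c)), hmem⟩

end IsolatedEnds

section UpperNeighbour

variable {V : Type u} {G : SimpleGraph V}

theorem exists_adj_mem_endComponent (hG : G.Connected) (e : G.end) (v : V) :
    ∃ w, G.Adj v w ∧ w ∈ endComponent e {v} := by
  obtain ⟨⟨w, k⟩, hw, hk, hadj⟩ := (endComponent e {v}).exists_adj_boundary_pair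
    hG.preconnected (by simp)
  obtain rfl : k = v := by simpa using hk
  exact ⟨w, hadj.symm, hw⟩

/-- The upper neighbour of the vertex `v` of a tree: the other endpoint of the edge at `v` that
leads towards the end `e`. -/
noncomputable def upNbr (hG : G.IsTree) (e : G.end) (v : V) : V :=
  (exists_adj_mem_endComponent hG.connected e v).choose

variable (hG : G.IsTree) (e : G.end)

local notation "up" => upNbr hG e

theorem adj_upNbr (v : V) : G.Adj v (up v) :=
  (exists_adj_mem_endComponent hG.connected e v).choose_spec.1

theorem upNbr_mem_endComponent (v : V) : up v ∈ endComponent e {v} :=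
  (exists_adj_mem_endComponent hG.connected e v).choose_spec.2

variable {e} {v w x y z : V}

theorem eq_upNbr_of_mem_endComponent (hvw : G.Adj v w) (hw : w ∈ endComponent e {v}) :
    w = up v :=
  eq_of_adj_of_mem_componentCompl hG.isAcyclic (by simp) hvw (adj_upNbr hG e v) hw
    (upNbr_mem_endComponent hG e v)

theorem eq_upNbr_of_dist_lt (hvw : G.Adj v w) (hz : z ∈ endComponent e {v})
    (hlt : G.dist w z < G.dist v z) : w = up v :=
  eq_upNbr_of_mem_endComponent hG hvw <|
    mem_componentCompl_of_forall_dist_lt (hG.connected w z) hz (by simpa using hlt)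

theorem dist_upNbr_lt (hz : z ∈ endComponent e {v}) : G.dist (up v) z < G.dist v z := by
  obtain ⟨p, hp⟩ := hG.connected.exists_walk_length_eq_dist v z
  cases p with
  | nil => exact absurd (ComponentCompl.notMem_of_mem hz) (by simp)
  | @cons _ w _ hvw q =>
    have hlt : G.dist w z < G.dist v z := by
      rw [← hp, Walk.length_cons]
      exact Nat.lt_succ_of_le (G.dist_le q)
    rwa [← eq_upNbr_of_dist_lt hG hvw hz hlt]

variable (e)

theorem eq_upNbr_or_upNbr_eq (hvw : G.Adj v w) : w = up v ∨ up w = v := by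
  classical
  obtain ⟨z, hz⟩ := (endComponent e {v, w}).nonempty
  have hne : G.dist z v ≠ G.dist z w := hG.isAcyclic.dist_ne_of_adj hvw (hG.connected z v)
  rw [dist_comm, dist_comm (u := z)] at hne
  rcases hne.lt_or_gt with h | h
  · exact .inr (eq_upNbr_of_dist_lt hG hvw.symm (mem_endComponent_anti (by simp) hz) h).symm
  · exact .inl (eq_upNbr_of_dist_lt hG hvw (mem_endComponent_anti (by simp) hz) h)

/-- Seen from a vertex beyond all the iterates, each step up decreases the distance. -/
theorem iterate_upNbr_ne (x : V) {n : ℕ} (hn : 0 < n) : up^[n] x ≠ x := by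
  classical
  obtain ⟨z, hz⟩ := (endComponent e ((Finset.range n).image (up^[·] x))).nonempty
  have hdist : ∀ m ≤ n, G.dist (up^[m] x) z + m ≤ G.dist x z := by
    intro m hm
    induction m with
    | zero => rfl
    | succ m ih =>
      have hzm : z ∈ endComponent e {up^[m] x} := mem_endComponent_anti (by
        simpa using ⟨m, hm, rfl⟩) hz
      have hlt := dist_upNbr_lt hG hzm
      rw [iterate_succ_apply']
      have := ih (by omega)
      omega
  intro h
  have := hdist n le_rfl
  rw [h] at this
  omega

theorem upNbr_upNbr_ne (x : V) : up (up x) ≠ x :=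
  iterate_upNbr_ne hG e x (n := 2) two_pos

theorem iterate_upNbr_injective (x : V) : Injective (up^[·] x) := by
  intro m n h
  by_contra hne
  wlog hmn : m < n generalizing m n
  · exact this h.symm (Ne.symm hne) (by omega)
  obtain ⟨k, rfl⟩ := Nat.exists_eq_add_of_lt hmn
  refine iterate_upNbr_ne hG e (up^[m] x) k.succ_pos ?_
  rw [← iterate_add_apply, Nat.add_comm]
  exact h.symm

theorem exists_iterate_upNbr_eq_iterate_upNbr (x y : V) : ∃ i j, up^[i] x = up^[j] y := by
  obtain ⟨p⟩ := hG.connected x y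
  induction p with
  | nil => exact ⟨0, 0, rfl⟩
  | @cons x w _ hxw p ih =>
    obtain ⟨i, j, hij⟩ := ih
    rcases eq_upNbr_or_upNbr_eq hG e hxw with rfl | rfl
    · exact ⟨i + 1, j, hij⟩
    · refine ⟨i, j + 1, ?_⟩
      rw [iterate_succ_apply', ← hij, ← iterate_succ_apply, iterate_succ_apply']

theorem iterate_succ_upNbr_mem_endComponent (v : V) (n : ℕ) :
    up^[n + 1] v ∈ endComponent e {v} := by
  induction n with
  | zero => exact upNbr_mem_endComponent hG e v
  | succ n ih =>
    rw [iterate_succ_apply']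
    refine ComponentCompl.mem_of_adj _ _ ih ?_ (adj_upNbr hG e _)
    rw [← iterate_succ_apply' up]
    simpa using iterate_upNbr_ne hG e v (n + 1).succ_pos

variable {e}

theorem exists_iterate_upNbr_eq_of_notMem (hz : z ∉ endComponent e {v}) :
    ∃ n, up^[n] z = v := by
  by_contra! hne
  have hout : ∀ n, up^[n] z ∉ endComponent e {v} := by
    intro n
    induction n with
    | zero => exact hz
    | succ n ih =>
      intro hmem
      rw [iterate_succ_apply'] at hmem
      exact ih (ComponentCompl.mem_of_adj _ _ hmem (by simpa using hne n) (adj_upNbr hG e _).symm)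
  obtain ⟨i, j, hij⟩ := exists_iterate_upNbr_eq_iterate_upNbr hG e z v
  refine hout (i + 1) ?_
  rw [iterate_succ_apply', hij, ← iterate_succ_apply' up]
  exact iterate_succ_upNbr_mem_endComponent hG e v j

variable {c : ℕ → V}

theorem iterate_upNbr_apply_add (hc : ∀ n, up (c (n + 1)) = c n) (k n : ℕ) :
    up^[k] (c (n + k)) = c n := by
  induction k with
  | zero => rfl
  | succ k ih => rw [iterate_succ_apply, ← Nat.add_assoc, hc, ih]

theorem injective_of_upNbr_succ (hc : ∀ n, up (c (n + 1)) = c n) : Injective c := by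
  intro m n h
  by_contra hne
  wlog hmn : m < n generalizing m n
  · exact this h.symm (Ne.symm hne) (by omega)
  obtain ⟨k, rfl⟩ := Nat.exists_eq_add_of_lt hmn
  refine iterate_upNbr_ne hG e (c m) k.succ_pos ?_
  nth_rewrite 1 [h]
  exact iterate_upNbr_apply_add hG hc (k + 1) m

end UpperNeighbour

namespace TreeDyn

open Filter

variable {V : Type} {T : TreeDyn V} {infty : T.G.end} {v₀ x y z : V} {dV : V → ℕ} {dE : V → V → ℕ}
  {Dg : ℕ}

local notation "up" => upNbr T.isTree infty

section Base

theorem not_below_iff : ¬ T.Below infty x y ↔ y ∈ endComponent infty {x} := by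
  simp only [Below, not_or, not_exists, not_not]
  constructor
  · rintro ⟨hne, h⟩
    exact ⟨by simpa using hne, h _⟩
  · intro h
    exact ⟨by simpa using ComponentCompl.notMem_of_mem h, fun _ => h.choose_spec⟩

theorem Below.exists_iterate_upNbr_eq (h : T.Below infty x y) : ∃ n, up^[n] y = x :=
  exists_iterate_upNbr_eq_of_notMem T.isTree fun hy => not_below_iff.2 hy h

theorem below_of_height_nonneg (h : 0 ≤ T.height infty v₀ x) : T.Below infty x v₀ := by
  by_contra hx
  rw [height, if_neg hx, neg_nonneg] at h
  exact hx (.inl (T.isTree.connected.dist_eq_zero_iff.1 (by omega)))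

theorem IsBase.eq_or_eq_of_adj (hbase : T.IsBase infty v₀) {k : ℕ}
    (h : T.G.Adj (up^[k + 1] v₀) z) : z = up^[k] v₀ ∨ z = up^[k + 2] v₀ := by
  by_contra! hz
  have hinj := iterate_upNbr_injective T.isTree infty v₀
  have hvalence : 3 ≤ (T.G.neighborSet (up^[k + 1] v₀)).ncard := by
    refine (Set.two_lt_ncard (T.locFin _)).2
      ⟨z, h, up^[k] v₀, ?_, up^[k + 2] v₀, ?_, hz.1, hz.2, hinj.ne (by omega)⟩
    · rw [iterate_succ_apply']
      exact (adj_upNbr T.isTree infty _).symm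
    · rw [iterate_succ_apply' _ (k + 1)]
      exact adj_upNbr T.isTree infty _
  obtain ⟨s, hs⟩ := (hbase.2 _ hvalence).exists_iterate_upNbr_eq
  rw [← iterate_add_apply] at hs
  exact iterate_upNbr_ne T.isTree infty v₀ (by omega) hs

theorem IsBase.eq_iterate_of_upNbr_eq (hbase : T.IsBase infty v₀) {k : ℕ}
    (h : up z = up^[k + 1] v₀) : z = up^[k] v₀ := by
  refine (hbase.eq_or_eq_of_adj (h ▸ (adj_upNbr T.isTree infty z).symm)).resolve_right fun hz => ?_
  refine upNbr_upNbr_ne T.isTree infty z ?_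
  rw [h, ← iterate_succ_apply' up, hz]

theorem IsBase.eventually_eq_or_eq_of_adj (hbase : T.IsBase infty v₀) (x : V) :
    ∀ᶠ n in atTop, ∀ z, T.G.Adj (up^[n + 1] x) z → z = up^[n] x ∨ z = up^[n + 2] x := by
  obtain ⟨i, j, hij⟩ := exists_iterate_upNbr_eq_iterate_upNbr T.isTree infty x v₀
  have hray (m : ℕ) : up^[i + m] x = up^[j + m] v₀ := by
    rw [Nat.add_comm, iterate_add_apply, hij, ← iterate_add_apply, Nat.add_comm]
  filter_upwards [eventually_ge_atTop i] with n hn z hz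
  obtain ⟨m, rfl⟩ := Nat.exists_eq_add_of_le hn
  rw [Nat.add_assoc, hray] at hz
  rw [Nat.add_assoc, hray, hray]
  exact hbase.eq_or_eq_of_adj hz

end Base

section Degrees

theorem IsLocalDeg.dV_eq_sum (hdeg : T.IsLocalDeg dV dE) (h : T.G.Adj x y) :
    dV x = ∑ z ∈ ((T.locFin x).inter_of_left {z | T.F z = T.F y}).toFinset, dE x z := by
  rw [hdeg.2.2.2.2 h, ← finsum_mem_eq_finite_toFinset_sum]
  rfl

theorem IsLocalDeg.dE_le_dV (hdeg : T.IsLocalDeg dV dE) (h : T.G.Adj x y) : dE x y ≤ dV x := by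
  rw [hdeg.dV_eq_sum h]
  exact Finset.single_le_sum_of_canonicallyOrdered (by simpa using h)

theorem IsLocalDeg.dE_eq_dV_iff (hdeg : T.IsLocalDeg dV dE) (h : T.G.Adj x y) :
    dE x y = dV x ↔ ∀ z, T.G.Adj x z → T.F z = T.F y → z = y := by
  refine ⟨fun heq z hz hF => ?_, fun huniq => ?_⟩
  · by_contra hne
    refine heq.not_lt ?_
    rw [hdeg.dV_eq_sum h]
    exact Finset.single_lt_sum hne (by simpa using h) (by simpa using ⟨hz, hF⟩)
      (hdeg.2.2.1 hz) fun _ _ _ => Nat.zero_le _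
  · rw [hdeg.dV_eq_sum h]
    refine (Finset.sum_eq_single_of_mem y (by simpa using h) fun z hz hne => ?_).symm
    rw [Set.Finite.mem_toFinset] at hz
    exact absurd (huniq z hz.1 hz.2) hne

theorem IsGlobalDeg.eq_sum_fiber (hDg : T.IsGlobalDeg dE Dg) (hdeg : T.IsLocalDeg dV dE)
    (h : T.G.Adj x y) : Dg = ∑ a ∈ (T.finFibers x).toFinset, dV a := by
  rw [hDg h, finsum_mem_eq_finite_toFinset_sum _ (T.finFibers x)]
  refine Finset.sum_congr rfl fun a ha => ?_
  obtain rfl : T.F a = x := by simpa using ha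
  obtain ⟨b, hab, rfl⟩ := T.edgeSurj h
  exact (hdeg.2.2.2.2 hab).symm

theorem IsGlobalDeg.dV_le (hDg : T.IsGlobalDeg dE Dg) (hdeg : T.IsLocalDeg dV dE)
    (h : T.G.Adj x y) : dV x ≤ Dg := by
  rw [hDg.eq_sum_fiber hdeg (T.adjMap h)]
  exact Finset.single_le_sum_of_canonicallyOrdered (by simp)

theorem IsGlobalDeg.dV_eq (hDg : T.IsGlobalDeg dE Dg) (hdeg : T.IsLocalDeg dV dE)
    (h : T.G.Adj x y) (hx : ∀ z, T.F z = T.F x → z = x) : dV x = Dg := by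
  rw [hDg.eq_sum_fiber hdeg (T.adjMap h)]
  refine (Finset.sum_eq_single_of_mem x (by simp) fun z hz hne => ?_).symm
  exact absurd (hx z (by simpa using hz)) hne

theorem IsGlobalDeg.ncard_fiber_le (hDg : T.IsGlobalDeg dE Dg) (hdeg : T.IsLocalDeg dV dE)
    (h : T.G.Adj x y) : {a | T.F a = x}.ncard ≤ Dg := by
  rw [hDg.eq_sum_fiber hdeg h, Set.ncard_eq_toFinset_card _ (T.finFibers x),
    Finset.card_eq_sum_ones]
  exact Finset.sum_le_sum fun a _ => hdeg.2.1 a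

end Degrees

section Reversed

variable (T infty) in
/-- A vertex is reversed if `F` does not send its upper edge to the upper edge of its image. -/
def IsReversed (y : V) : Prop :=
  T.F (up y) ≠ up (T.F y)

theorem IsReversed.upNbr_eq_of_adj (hy : T.IsReversed infty y) (hz : T.G.Adj y z)
    (hF : T.F z = up (T.F y)) : up z = y :=
  (eq_upNbr_or_upNbr_eq T.isTree infty hz).resolve_left fun h => hy (h ▸ hF)

theorem isReversed_of_map_eq (hF : T.F z = up (T.F (up z))) : T.IsReversed infty z := by
  rw [IsReversed, hF]
  exact (upNbr_upNbr_ne T.isTree infty _).symm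

theorem IsReversed.exists_lift (hy : T.IsReversed infty y) :
    ∃ z, T.IsReversed infty z ∧ up z = y ∧ T.F z = up (T.F y) := by
  obtain ⟨z, hz, hF⟩ := T.edgeSurj (adj_upNbr T.isTree infty (T.F y))
  have hup := hy.upNbr_eq_of_adj hz hF
  exact ⟨z, isReversed_of_map_eq (by rw [hup, hF]), hup, hF⟩

variable (T infty) in
/-- The reversed vertices in the fibre of `F` over `x`. -/
def reversedFiber (x : V) : Set V :=
  {y | T.F y = x ∧ T.IsReversed infty y}

theorem reversedFiber_finite (x : V) : (T.reversedFiber infty x).Finite :=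
  (T.finFibers x).subset fun _ h => h.1

theorem reversedFiber_subset_image_upNbr (x : V) :
    T.reversedFiber infty x ⊆ up '' T.reversedFiber infty (up x) := by
  rintro y ⟨rfl, hy⟩
  obtain ⟨z, hz, rfl, hF⟩ := hy.exists_lift
  exact ⟨z, ⟨hF, hz⟩, rfl⟩

theorem ncard_reversedFiber_le_image (x : V) : (T.reversedFiber infty x).ncard ≤
    (up '' T.reversedFiber infty (up x)).ncard :=
  Set.ncard_le_ncard (reversedFiber_subset_image_upNbr x) ((reversedFiber_finite _).image _)

theorem IsGlobalDeg.ncard_reversedFiber_le (hDg : T.IsGlobalDeg dE Dg)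
    (hdeg : T.IsLocalDeg dV dE) (x : V) : (T.reversedFiber infty x).ncard ≤ Dg :=
  (Set.ncard_le_ncard (fun _ h => h.1) (T.finFibers x)).trans
    (hDg.ncard_fiber_le hdeg (adj_upNbr T.isTree infty x))

theorem IsGlobalDeg.eventually_injOn_reversedFiber (hDg : T.IsGlobalDeg dE Dg)
    (hdeg : T.IsLocalDeg dV dE) (x : V) :
    ∀ᶠ n in atTop, Set.InjOn up (T.reversedFiber infty (up^[n + 1] x)) := by
  have hmono : Monotone fun n => (T.reversedFiber infty (up^[n] x)).ncard := by
    refine monotone_nat_of_le_succ fun n => ?_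
    rw [iterate_succ_apply']
    exact (ncard_reversedFiber_le_image _).trans (Set.ncard_image_le (reversedFiber_finite _))
  obtain ⟨b, N, hN⟩ := converges_of_monotone_of_bounded hmono fun n =>
    hDg.ncard_reversedFiber_le hdeg _
  filter_upwards [eventually_ge_atTop N] with n hn
  refine Set.injOn_of_ncard_image_eq
    ((Set.ncard_image_le (reversedFiber_finite _)).antisymm ?_) (reversedFiber_finite _)
  rw [hN (n + 1) (by omega), ← hN n hn, iterate_succ_apply']
  exact ncard_reversedFiber_le_image _

end Reversed

section DescendingLift

variable {c : ℕ → V}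

variable (T infty) in
/-- A sequence of reversed vertices descending in `T` whose image is a ray ascending to
`infty`. -/
structure IsDescendingLift (c : ℕ → V) : Prop where
  isReversed : ∀ n, T.IsReversed infty (c n)
  upNbr_succ : ∀ n, up (c (n + 1)) = c n
  map_succ : ∀ n, T.F (c (n + 1)) = up (T.F (c n))

theorem IsReversed.exists_isDescendingLift (hx : T.IsReversed infty x) :
    ∃ c, T.IsDescendingLift infty c := by
  have hlift (y : {y // T.IsReversed infty y}) :
      ∃ z : {z // T.IsReversed infty z}, up z.1 = y ∧ T.F z = up (T.F y) := by
    obtain ⟨z, hz, h⟩ := y.2.exists_lift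
    exact ⟨⟨z, hz⟩, h⟩
  choose lift hup hmap using hlift
  refine ⟨fun n => lift^[n] ⟨x, hx⟩, fun n => (lift^[n] _).2, fun n => ?_, fun n => ?_⟩
  · rw [iterate_succ_apply', hup]
  · rw [iterate_succ_apply', hmap]

namespace IsDescendingLift

theorem adj_succ (hc : T.IsDescendingLift infty c) (n : ℕ) : T.G.Adj (c n) (c (n + 1)) :=
  hc.upNbr_succ n ▸ (adj_upNbr T.isTree infty (c (n + 1))).symm

theorem map_eq_iterate (hc : T.IsDescendingLift infty c) (n : ℕ) :
    T.F (c n) = up^[n] (T.F (c 0)) := by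
  induction n with
  | zero => rfl
  | succ n ih => rw [hc.map_succ, ih, iterate_succ_apply']

theorem eventually_eq_succ_of_adj (hc : T.IsDescendingLift infty c) (hdeg : T.IsLocalDeg dV dE)
    (hDg : T.IsGlobalDeg dE Dg) :
    ∀ᶠ n in atTop, ∀ z, T.G.Adj (c n) z → T.F z = T.F (c (n + 1)) → z = c (n + 1) := by
  filter_upwards [hDg.eventually_injOn_reversedFiber (infty := infty) hdeg (T.F (c 0))]
    with n hinj z hz hF
  rw [← hc.map_eq_iterate] at hinj
  have hmap : T.F z = up (T.F (c n)) := hF.trans (hc.map_succ n)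
  have hup : up z = c n := (hc.isReversed n).upNbr_eq_of_adj hz hmap
  have hrev : T.IsReversed infty z := isReversed_of_map_eq (by rw [hup, hmap])
  exact hinj ⟨hF, hrev⟩ ⟨rfl, hc.isReversed _⟩ (hup.trans (hc.upNbr_succ n).symm)

theorem eventually_dE_eq_dV (hc : T.IsDescendingLift infty c) (hdeg : T.IsLocalDeg dV dE)
    (hDg : T.IsGlobalDeg dE Dg) :
    ∀ᶠ n in atTop, dE (c n) (c (n + 1)) = dV (c n) := by
  filter_upwards [hc.eventually_eq_succ_of_adj hdeg hDg] with n hn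
  exact (hdeg.dE_eq_dV_iff (hc.adj_succ n)).2 hn

theorem eventually_dV_succ_eq (hc : T.IsDescendingLift infty c) (hdeg : T.IsLocalDeg dV dE)
    (hDg : T.IsGlobalDeg dE Dg) : ∀ᶠ n in atTop, dV (c (n + 1)) = dV (c n) := by
  obtain ⟨N, hN⟩ := eventually_atTop.1 (hc.eventually_dE_eq_dV hdeg hDg)
  have hmono : Monotone fun n => dV (c (N + n)) := by
    refine monotone_nat_of_le_succ fun n => ?_
    rw [← hN (N + n) (by omega), hdeg.1]
    exact hdeg.dE_le_dV (hc.adj_succ (N + n)).symm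
  obtain ⟨b, M, hM⟩ := converges_of_monotone_of_bounded hmono fun n =>
    hDg.dV_le hdeg (hc.adj_succ (N + n))
  filter_upwards [eventually_ge_atTop (N + M)] with n hn
  obtain ⟨k, rfl⟩ := Nat.exists_eq_add_of_le (show N ≤ n by omega)
  exact (hM (k + 1) (by omega)).trans (hM k (by omega)).symm

theorem eventually_eq_of_adj_succ (hc : T.IsDescendingLift infty c) (hdeg : T.IsLocalDeg dV dE)
    (hDg : T.IsGlobalDeg dE Dg) :
    ∀ᶠ n in atTop, ∀ z, T.G.Adj (c (n + 1)) z → T.F z = T.F (c n) → z = c n := by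
  filter_upwards [hc.eventually_dE_eq_dV hdeg hDg, hc.eventually_dV_succ_eq hdeg hDg]
    with n hdE hdV
  exact (hdeg.dE_eq_dV_iff (hc.adj_succ n).symm).1 (by rw [hdeg.1, hdE, hdV])

theorem eventually_eq_or_eq_of_adj (hc : T.IsDescendingLift infty c) (hdeg : T.IsLocalDeg dV dE)
    (hbase : T.IsBase infty v₀) (hDg : T.IsGlobalDeg dE Dg) :
    ∀ᶠ n in atTop, ∀ z, T.G.Adj (c (n + 1)) z → z = c n ∨ z = c (n + 2) := by
  filter_upwards [hc.eventually_eq_of_adj_succ hdeg hDg,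
    (tendsto_add_atTop_nat 1).eventually (hc.eventually_eq_succ_of_adj hdeg hDg),
    hbase.eventually_eq_or_eq_of_adj (T.F (c 0))] with n hdown hup hbase z hz
  simp only [← hc.map_eq_iterate] at hbase
  exact (hbase _ (T.adjMap hz)).imp (hdown z hz) (hup z hz)

end IsDescendingLift

theorem not_isReversed (huniq : ∀ e : T.G.end, IsIsolatedEnd T.G e → e = infty)
    (hdeg : T.IsLocalDeg dV dE) (hbase : T.IsBase infty v₀) (hDg : T.IsGlobalDeg dE Dg) (x : V) :
    ¬ T.IsReversed infty x := by
  intro hx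
  obtain ⟨c, hc⟩ := hx.exists_isDescendingLift
  obtain ⟨N, hN⟩ := eventually_atTop.1 (hc.eventually_eq_or_eq_of_adj hdeg hbase hDg)
  have hinj : Injective fun n => c (N + n) :=
    (injective_of_upNbr_succ T.isTree hc.upNbr_succ).comp (add_right_injective N)
  obtain ⟨p, hp, hmem⟩ := exists_isIsolatedEnd_of_thin_ray hinj (fun n => hc.adj_succ (N + n))
    fun n => hN (N + n) (by omega)
  obtain rfl := huniq p hp
  refine upNbr_upNbr_ne T.isTree p (c N) ?_
  rw [← eq_upNbr_of_mem_endComponent T.isTree (hc.adj_succ N) hmem, hc.upNbr_succ]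

end DescendingLift

section Commute

theorem commute_upNbr (huniq : ∀ e : T.G.end, IsIsolatedEnd T.G e → e = infty)
    (hdeg : T.IsLocalDeg dV dE) (hbase : T.IsBase infty v₀) (hDg : T.IsGlobalDeg dE Dg) :
    Function.Commute T.F up := fun x =>
  not_not.1 (not_isReversed huniq hdeg hbase hDg x)

theorem eq_upNbr_of_map_eq (hcomm : Function.Commute T.F up)
    (hz : T.G.Adj x z) (hF : T.F z = T.F (up x)) : z = up x := by
  refine (eq_upNbr_or_upNbr_eq T.isTree infty hz).resolve_right fun hup => ?_
  refine upNbr_upNbr_ne T.isTree infty (T.F x) ?_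
  rw [← hcomm x, ← hF, ← hcomm z, hup]

theorem IsBase.eq_iterate_of_iterate_upNbr_eq (hbase : T.IsBase infty v₀) {i k : ℕ}
    (h : up^[i] z = up^[i + k] v₀) : z = up^[k] v₀ := by
  induction i with
  | zero => simpa using h
  | succ i ih =>
    refine ih (hbase.eq_iterate_of_upNbr_eq ?_)
    rwa [← iterate_succ_apply' up, Nat.add_right_comm]

theorem IsBase.eq_of_map_eq (hbase : T.IsBase infty v₀)
    (hcomm : Function.Commute T.F up) {k : ℕ}
    (hF : T.F z = T.F (up^[k] v₀)) : z = up^[k] v₀ := by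
  obtain ⟨i, j, hij⟩ := exists_iterate_upNbr_eq_iterate_upNbr T.isTree infty z (up^[k] v₀)
  obtain rfl : i = j := by
    refine iterate_upNbr_injective T.isTree infty (T.F z) ?_
    have := congrArg T.F hij
    rwa [hcomm.iterate_right, hcomm.iterate_right, ← hF] at this
  exact hbase.eq_iterate_of_iterate_upNbr_eq (hij.trans (iterate_add_apply _ i k v₀).symm)

end Commute

end TreeDyn

theorem upper_edge_degree_and_global_degree_general
    {V : Type} (T : TreeDyn V) (infty : T.G.end)
    (huniq : ∀ e : T.G.end, IsIsolatedEnd T.G e → e = infty)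
    (dV : V → ℕ) (dE : V → V → ℕ) (hdeg : T.IsLocalDeg dV dE)
    (v₀ : V) (hbase : T.IsBase infty v₀)
    (Dg : ℕ) (hDg : T.IsGlobalDeg dE Dg) :
    (∀ v w : V, T.G.Adj v w → ¬ T.Below infty v w → dE v w = dV v) ∧
    (∀ v : V, 0 ≤ T.height infty v₀ v → dV v = Dg) := by
  have hcomm := TreeDyn.commute_upNbr huniq hdeg hbase hDg
  refine ⟨fun v w hvw hw => ?_, fun v hv => ?_⟩
  · obtain rfl := eq_upNbr_of_mem_endComponent T.isTree hvw (TreeDyn.not_below_iff.1 hw)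
    exact (hdeg.dE_eq_dV_iff hvw).2 fun z => TreeDyn.eq_upNbr_of_map_eq hcomm
  · obtain ⟨k, rfl⟩ := (TreeDyn.below_of_height_nonneg hv).exists_iterate_upNbr_eq
    exact hDg.dV_eq hdeg (adj_upNbr T.isTree infty _) fun z => hbase.eq_of_map_eq hcomm

/-- **Degrees of upper edges.**
Let `F : T → T` be a polynomial-like branched covering of a simplicial tree
with local degree function `(dV, dE)`, base `v₀` and global degree `Dg`.
Then for every vertex `v`, the upper edge of `v` (the edge `{v,w}` with `w`
not below `v`, i.e. leading towards `infty`) satisfies `dE v w = dV v`;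
and whenever the combinatorial height of `v` is nonnegative, `dV v = Dg`. -/
theorem upper_edge_degree_and_global_degree
    {V : Type} (T : TreeDyn V) (infty : T.G.end)
    (hpl : T.IsPolyLike infty)
    (dV : V → ℕ) (dE : V → V → ℕ) (hdeg : T.IsLocalDeg dV dE)
    (v₀ : V) (hbase : T.IsBase infty v₀)
    (Dg : ℕ) (hDg : T.IsGlobalDeg dE Dg) :
    (∀ v w : V, T.G.Adj v w → ¬ T.Below infty v w → dE v w = dV v) ∧
    (∀ v : V, 0 ≤ T.height infty v₀ v → dV v = Dg) :=
  upper_edge_degree_and_global_degree_general T infty hpl.2.2.1 dV dE hdeg v₀ hbase Dg hDg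
end
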